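/- If H is a hypergraph on n vertices that contains no isolated vertices and no edges of size one, then γ_g(H) ≤ (5/8)·n. -/

import Mathlib

attribute [local instance 10] Classical.propDecidable

variable {V : Type}

/-- The closed neighborhood of a vertex in a hypergraph given by its edge set. -/
noncomputable def closedNbhd [Fintype V] (H : Finset (Finset V)) (v : V) : Finset V :=
  Finset.univ.filter (fun u => u = v ∨ ∃ e ∈ H, u ∈ e ∧ v ∈ e)

private lemma card_sdiff_union_lt [Fintype V] {S T : Finset V} (h : ¬ T ⊆ S) :
    (Finset.univ \ (S ∪ T)).card < (Finset.univ \ S).card := by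
  classical
  obtain ⟨u, huT, huS⟩ := Finset.not_subset.mp h
  apply Finset.card_lt_card
  rw [Finset.ssubset_def]
  constructor
  · exact Finset.sdiff_subset_sdiff (Finset.Subset.refl _) Finset.subset_union_left
  · intro hc
    have hu : u ∈ Finset.univ \ S := by simp [huS]
    have := hc hu
    simp [huT] at this

/-- Value of the domination game on a hypergraph: `S` is the set of vertices already
dominated, `dom = true` iff Dominator is the next player to move.  A legal move is a vertex
dominating at least one new vertex; Dominator minimizes, Staller maximizes the total
number of moves, and both play optimally. -/
noncomputable def domGameVal [Fintype V] (H : Finset (Finset V)) (dom : Bool) (S : Finset V) :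
    ℕ :=
  if h : (Finset.univ.filter fun v => ¬ closedNbhd H v ⊆ S).Nonempty then
    1 + (if dom then
        (Finset.univ.filter fun v => ¬ closedNbhd H v ⊆ S).attach.inf'
          (Finset.attach_nonempty_iff.mpr h)
          (fun v => domGameVal H false (S ∪ closedNbhd H v.1))
      else
        (Finset.univ.filter fun v => ¬ closedNbhd H v ⊆ S).attach.sup'
          (Finset.attach_nonempty_iff.mpr h)
          (fun v => domGameVal H true (S ∪ closedNbhd H v.1)))
  else 0
termination_by (Finset.univ \ S).card
decreasing_by
  · exact card_sdiff_union_lt (Finset.mem_filter.mp v.2).2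
  · exact card_sdiff_union_lt (Finset.mem_filter.mp v.2).2

/-- The game domination number (Dominator starts). -/
noncomputable def gammaGame [Fintype V] (H : Finset (Finset V)) : ℕ :=
  domGameVal H true ∅

/-!
The argument is a potential method on the 2-section graph. Call a vertex white while it is not
dominated and blue afterwards, and weight the position so that the potential is `10 * n` at the
start. If Dominator always has a move which together with any reply lowers the potential by at least
`32`, then a play has at most `10 * n / 16` moves.

In the opening a white vertex weighs `10` and a blue vertex with white neighbours `6` or `8`. A
reply always gains at least `8`, so a move gaining `24` is enough. If there is none, but some white
vertex has a white leaf and another white neighbour, then some white vertex is the centre of a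
spider with three legs of length two; playing it gains `22`, after which every reply gains `10`. The
same balance `22 + 10` applies to any move gaining `22` once there are no such white vertices. When
no move gains `22` either, the white vertices induce disjoint cycles, edges and isolated vertices.

From then on isolated white vertices weigh `16` or `14`, and the vertices of white
edges and cycles weigh `10`; the weight of the blue vertices covers the change of weights. Dominator
balances `24 + 8`, `22 + 10` or `18 + 14`. If he cannot, the white vertices form only edges and
isolated vertices, and double counting the edges against the blue vertices seeing two or three of
them shows that the potential with weights `16` and `12` is no larger. With these weights playing an
end of a white edge gains `24` and every reply gains `8`, and once no white edges are left every
move gains `16`.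
-/

open Finset

section Sums

variable {ι : Type*} [Fintype ι] {f g d e : ι → ℕ}

lemma sum_add_le_sum_of_subset (T : Finset ι) {n : ℕ} (hle : ∀ i, f i ≤ g i)
    (hT : ∑ i ∈ T, f i + n ≤ ∑ i ∈ T, g i) : ∑ i, f i + n ≤ ∑ i, g i := by
  classical
  have hcompl : ∑ i ∈ Tᶜ, f i ≤ ∑ i ∈ Tᶜ, g i := sum_le_sum fun i _ => hle i
  rw [← sum_add_sum_compl T f, ← sum_add_sum_compl T g]
  omega

lemma sum_add_sum_le_sum_add_sum (h : ∀ i, f i + d i ≤ g i + e i) :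
    ∑ i, f i + ∑ i, d i ≤ ∑ i, g i + ∑ i, e i := by
  simpa only [sum_add_distrib] using sum_le_sum fun i _ => h i

end Sums

section Graph

variable {α : Type*} [Fintype α] {G : SimpleGraph α} {S T : Finset α}

/-- The closed neighbourhood `N[p]` of a vertex of a simple graph. -/
noncomputable def closedNbr (G : SimpleGraph α) (p : α) : Finset α :=
  insert p (G.neighborFinset p)

/-- The number of neighbours of `v` that are still *white*, i.e. outside the set `S` of
dominated vertices. Vertices of `S` are called *blue*. -/
noncomputable def whiteDeg (G : SimpleGraph α) (S : Finset α) (v : α) : ℕ :=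
  #(G.neighborFinset v \ S)

lemma mem_closedNbr {p u : α} : u ∈ closedNbr G p ↔ u = p ∨ G.Adj p u := by
  simp [closedNbr]

lemma self_mem_closedNbr (p : α) : p ∈ closedNbr G p := mem_insert_self _ _

lemma mem_closedNbr_of_adj {p u : α} (h : G.Adj p u) : u ∈ closedNbr G p :=
  mem_closedNbr.mpr (Or.inr h)

lemma not_closedNbr_subset {p u : α} (hu : u ∈ closedNbr G p) (huS : u ∉ S) :
    ¬ closedNbr G p ⊆ S := fun h => huS (h hu)

lemma adj_of_mem_closedNbr {p u : α} (hu : u ∈ closedNbr G p) (huS : u ∉ S) (hp : p ∈ S) :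
    G.Adj p u :=
  (mem_closedNbr.mp hu).resolve_left fun h => huS (h ▸ hp)

lemma whiteDeg_anti (hST : S ⊆ T) (v : α) : whiteDeg G T v ≤ whiteDeg G S v :=
  card_le_card (sdiff_subset_sdiff Subset.rfl hST)

lemma whiteDeg_pos {v : α} : 0 < whiteDeg G S v ↔ ∃ u, G.Adj v u ∧ u ∉ S := by
  simp [whiteDeg, card_pos, Finset.Nonempty]

lemma whiteDeg_eq_zero {v : α} : whiteDeg G S v = 0 ↔ ∀ u, G.Adj v u → u ∈ S := by
  simp [whiteDeg, sdiff_eq_empty_iff_subset, subset_iff]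

lemma whiteDeg_closedNbr (S : Finset α) (p : α) : whiteDeg G (S ∪ closedNbr G p) p = 0 :=
  whiteDeg_eq_zero.mpr fun _ h => mem_union_right _ (mem_closedNbr_of_adj h)

lemma whiteDeg_le_card {v : α} (T : Finset α) (h : ∀ u, G.Adj v u → u ∉ S → u ∈ T) :
    whiteDeg G S v ≤ #T :=
  card_le_card fun u hu => by simp_all

lemma card_le_whiteDeg {v : α} (T : Finset α) (h : ∀ u ∈ T, G.Adj v u ∧ u ∉ S) :
    #T ≤ whiteDeg G S v :=
  card_le_card fun u hu => by simpa using h u hu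

lemma two_le_whiteDeg {v a b : α} (ha : G.Adj v a) (haS : a ∉ S) (hb : G.Adj v b) (hbS : b ∉ S)
    (hab : a ≠ b) : 2 ≤ whiteDeg G S v := by
  rw [← card_pair hab]
  exact card_le_whiteDeg _ (by simp [*])

lemma eq_of_whiteDeg_le_one {v a b : α} (h : whiteDeg G S v ≤ 1) (ha : G.Adj v a) (haS : a ∉ S)
    (hb : G.Adj v b) (hbS : b ∉ S) : a = b := by
  by_contra hab
  have := two_le_whiteDeg ha haS hb hbS hab
  omega

lemma exists_white_adj_notMem {v : α} {T : Finset α} (h : #T < whiteDeg G S v) :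
    ∃ u, u ∉ T ∧ G.Adj v u ∧ u ∉ S := by
  by_contra! hc
  exact h.not_ge (whiteDeg_le_card T fun u hu huS => by_contra fun huT => huS (hc u huT hu))

lemma exists_white_adj_ne {v : α} (a : α) (h : 2 ≤ whiteDeg G S v) :
    ∃ b, b ≠ a ∧ G.Adj v b ∧ b ∉ S := by
  simpa using exists_white_adj_notMem (T := {a}) (by rwa [card_singleton])

lemma whiteDeg_insert {v y : α} (hy : y ∉ S) :
    whiteDeg G (insert y S) v + (if G.Adj v y then 1 else 0) = whiteDeg G S v := by
  rw [whiteDeg, whiteDeg, sdiff_insert]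
  split_ifs with h
  · exact card_erase_add_one (by simp [h, hy])
  · rw [erase_eq_of_notMem (by simp [h]), add_zero]

lemma whiteDeg_insert_add_one {v y : α} (h : G.Adj v y) (hy : y ∉ S) :
    whiteDeg G (insert y S) v + 1 = whiteDeg G S v := by
  simpa [h] using whiteDeg_insert (G := G) (v := v) hy

lemma whiteDeg_lt_of_adj {v y : α} (h : G.Adj v y) (hy : y ∉ S) (hST : S ⊆ T) (hyT : y ∈ T) :
    whiteDeg G T v < whiteDeg G S v := by
  have := whiteDeg_anti (G := G) (insert_subset hyT hST) v
  have := whiteDeg_insert_add_one h hy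
  omega

lemma whiteDeg_union_eq_zero {v : α} (T : Finset α) (h : whiteDeg G S v = 0) :
    whiteDeg G (S ∪ T) v = 0 :=
  Nat.eq_zero_of_le_zero ((whiteDeg_anti subset_union_left v).trans_eq h)

end Graph

section Game

/-- The 2-section of a hypergraph: two distinct vertices are adjacent when they share an edge.
Domination in the hypergraph is domination in this graph. -/
def twoSection (H : Finset (Finset V)) : SimpleGraph V where
  Adj u v := u ≠ v ∧ ∃ e ∈ H, u ∈ e ∧ v ∈ e
  symm := ⟨fun _ _ ⟨h, e, he, hu, hv⟩ => ⟨h.symm, e, he, hv, hu⟩⟩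
  loopless := ⟨fun _ h => h.1 rfl⟩

/-- Move `p` of Dominator is legal at `S` and lowers the potential `F` by at least `a`, and every
legal reply of Staller lowers it further by at least `b`. -/
def IsProfitableMove {α : Type*} [Fintype α] (G : SimpleGraph α) (F : Finset α → ℕ) (a b : ℕ)
    (S : Finset α) (p : α) : Prop :=
  ¬ closedNbr G p ⊆ S ∧ F (S ∪ closedNbr G p) + a ≤ F S ∧
    ∀ q, ¬ closedNbr G q ⊆ S ∪ closedNbr G p →
      F (S ∪ closedNbr G p ∪ closedNbr G q) + b ≤ F (S ∪ closedNbr G p)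

variable [Fintype V] {H : Finset (Finset V)} {S : Finset V} {p : V}

lemma closedNbr_twoSection (H : Finset (Finset V)) (v : V) :
    closedNbr (twoSection H) v = closedNbhd H v := by
  ext u
  simp only [mem_closedNbr, twoSection, closedNbhd, mem_filter, mem_univ, true_and]
  grind

lemma domGameVal_univ (H : Finset (Finset V)) (dom : Bool) : domGameVal H dom univ = 0 := by
  rw [domGameVal, dif_neg (by simp)]

lemma domGameVal_true_le (hp : ¬ closedNbhd H p ⊆ S) :
    domGameVal H true S ≤ 1 + domGameVal H false (S ∪ closedNbhd H p) := by
  have hmem : p ∈ univ.filter fun v => ¬ closedNbhd H v ⊆ S := by simpa using hp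
  rw [domGameVal, dif_pos ⟨p, hmem⟩, if_pos rfl]
  gcongr
  exact inf'_le (fun v : {x // x ∈ univ.filter fun v => ¬ closedNbhd H v ⊆ S} =>
    domGameVal H false (S ∪ closedNbhd H v.1)) (mem_attach _ ⟨p, hmem⟩)

lemma domGameVal_false_eq_zero_or (H : Finset (Finset V)) (S : Finset V) :
    domGameVal H false S = 0 ∨ ∃ q, ¬ closedNbhd H q ⊆ S ∧
      domGameVal H false S = 1 + domGameVal H true (S ∪ closedNbhd H q) := by
  by_cases hne : (univ.filter fun v => ¬ closedNbhd H v ⊆ S).Nonempty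
  · obtain ⟨q, -, hq⟩ := exists_mem_eq_sup' (attach_nonempty_iff.mpr hne)
      fun v => domGameVal H true (S ∪ closedNbhd H v.1)
    refine Or.inr ⟨q, (mem_filter.mp q.2).2, ?_⟩
    rw [domGameVal, dif_pos hne, if_neg Bool.false_ne_true, hq]
  · exact Or.inl (by rw [domGameVal, dif_neg hne])

theorem mul_domGameVal_le_of_potential {c : ℕ} {Inv : Finset V → Prop} {F : Finset V → ℕ}
    (hInv : ∀ S T, Inv S → S ⊆ T → Inv T)
    (hstep : ∀ S, Inv S → S ≠ univ → c * domGameVal H true S ≤ F S ∨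
      ∃ p a b, c ≤ a ∧ 2 * c ≤ a + b ∧ IsProfitableMove (twoSection H) F a b S p)
    (hS : Inv S) : c * domGameVal H true S ≤ F S := by
  induction S using WellFoundedGT.induction with
  | ind S ih =>
    rcases eq_or_ne S univ with rfl | hne
    · simp [domGameVal_univ]
    rcases hstep S hS hne with h | ⟨p, a, b, hca, hcab, hp, hgain, hreply⟩
    · exact h
    simp only [closedNbr_twoSection] at hp hgain hreply
    have hmove := Nat.mul_le_mul_left c (domGameVal_true_le hp)
    rcases domGameVal_false_eq_zero_or H (S ∪ closedNbhd H p) with h0 | ⟨q, hq, hval⟩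
    · rw [h0] at hmove
      omega
    have hsub : S ⊂ S ∪ closedNbhd H p ∪ closedNbhd H q :=
      (left_lt_sup.mpr hp).trans_le le_sup_left
    have hrec := ih _ hsub (hInv _ _ hS hsub.subset)
    have := hreply q hq
    rw [hval] at hmove
    linarith

end Game

section WhitePotential

variable {α : Type*} [Fintype α] {G : SimpleGraph α} {S T : Finset α} {B c : α → ℕ}

/-- The weight of a vertex in `whitePotential`: a white vertex `v` weighs `B v`, minus `c v` for
each of its white neighbours; blue vertices are weightless. -/
noncomputable def whiteWeight (B c : α → ℕ) (G : SimpleGraph α) (S : Finset α) (v : α) : ℕ :=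
  if v ∈ S then 0 else B v - c v * whiteDeg G S v

/-- The total weight of the white vertices, where each edge between white vertices discounts both
of its ends. -/
noncomputable def whitePotential (B c : α → ℕ) (G : SimpleGraph α) (S : Finset α) : ℕ :=
  ∑ v, whiteWeight B c G S v

/-- The discount rate `c` is constant along edges between white vertices, and at each white vertex
the discount is at most half of the base weight `B`. Then dominating vertices never increases the
white potential. -/
structure IsCompatible (B c : α → ℕ) (G : SimpleGraph α) (S : Finset α) : Prop where
  two_mul_le : ∀ v, v ∉ S → 2 * (c v * whiteDeg G S v) ≤ B v
  eq_of_adj : ∀ u v, u ∉ S → v ∉ S → G.Adj u v → c u = c v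

lemma IsCompatible.mono (h : IsCompatible B c G S) (hST : S ⊆ T) : IsCompatible B c G T where
  two_mul_le v hv :=
    le_trans (by gcongr; exact whiteDeg_anti hST v) (h.two_mul_le v fun hS => hv (hST hS))
  eq_of_adj u v hu hv := h.eq_of_adj u v (fun hS => hu (hST hS)) fun hS => hv (hST hS)

lemma IsCompatible.whiteWeight_insert_le (h : IsCompatible B c G S) {y : α} (hy : y ∉ S) (v : α) :
    whiteWeight B c G (insert y S) v + (if v = y then B y - c y * whiteDeg G S y else 0) ≤
      whiteWeight B c G S v + if v ∈ G.neighborFinset y \ S then c y else 0 := by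
  rcases eq_or_ne v y with rfl | hvy
  · simp [whiteWeight, hy]
  by_cases hvS : v ∈ S
  · simp [whiteWeight, hvS, hvy]
  have hdeg := whiteDeg_insert (G := G) (v := v) hy
  have hle := h.two_mul_le v hvS
  by_cases hadj : G.Adj y v
  · rw [if_pos hadj.symm] at hdeg
    simp only [whiteWeight, mem_insert, hvy, hvS, or_self, if_false, mem_sdiff,
      SimpleGraph.mem_neighborFinset, hadj, not_false_eq_true, and_self, if_true,
      h.eq_of_adj y v hy hvS hadj]
    rw [← hdeg, mul_add] at hle ⊢
    omega
  · rw [if_neg (mt SimpleGraph.Adj.symm hadj), add_zero] at hdeg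
    simp [whiteWeight, hvy, hvS, hadj, hdeg]

lemma IsCompatible.whitePotential_insert (h : IsCompatible B c G S) {y : α} (hy : y ∉ S) :
    whitePotential B c G (insert y S) + B y ≤
      whitePotential B c G S + 2 * (c y * whiteDeg G S y) := by
  have hsum := sum_add_sum_le_sum_add_sum (h.whiteWeight_insert_le hy)
  rw [sum_ite_eq' univ y, if_pos (mem_univ y), sum_ite_mem, univ_inter, sum_const, smul_eq_mul,
    mul_comm (#_)] at hsum
  have hle := h.two_mul_le y hy
  change whitePotential B c G (insert y S) + _ ≤ whitePotential B c G S + c y * whiteDeg G S y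
    at hsum
  omega

lemma IsCompatible.whitePotential_anti (h : IsCompatible B c G S) (hST : S ⊆ T) :
    whitePotential B c G T ≤ whitePotential B c G S := by
  suffices key : ∀ D : Finset α, whitePotential B c G (S ∪ D) ≤ whitePotential B c G S by
    simpa only [union_eq_right.mpr hST] using key T
  intro D
  induction D using Finset.induction_on with
  | empty => simp
  | insert y D _ ih =>
    rw [union_insert]
    by_cases hy : y ∈ S ∪ D
    · rwa [insert_eq_of_mem hy]
    · have hD := h.mono (subset_union_left (s₂ := D))
      have := hD.whitePotential_insert hy
      have := hD.two_mul_le y hy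
      omega

lemma IsCompatible.whitePotential_of_mem (h : IsCompatible B c G S) (hST : S ⊆ T) {y : α}
    (hy : y ∉ S) (hyT : y ∈ T) :
    whitePotential B c G T + B y ≤ whitePotential B c G S + 2 * (c y * whiteDeg G S y) := by
  have hins := h.whitePotential_insert hy
  have hanti := (h.mono (subset_insert y S)).whitePotential_anti (insert_subset hyT hST)
  omega

lemma IsCompatible.whitePotential_of_adj (h : IsCompatible B c G S) (hST : S ⊆ T) {y z : α}
    (hy : y ∉ S) (hyT : y ∈ T) (hz : z ∉ S) (hzT : z ∈ T) (hyz : G.Adj y z) :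
    whitePotential B c G T + B y + B z + 2 * c z ≤
      whitePotential B c G S + 2 * (c y * whiteDeg G S y) + 2 * (c z * whiteDeg G S z) := by
  have hins := h.whitePotential_insert hy
  have htwo := (h.mono (subset_insert y S)).whitePotential_of_mem (insert_subset hyT hST)
    (by simp [hz, hyz.ne']) hzT
  rw [← whiteDeg_insert_add_one hyz.symm hy, mul_add]
  omega

end WhitePotential

section Endgame

variable {α : Type*} [Fintype α] {G : SimpleGraph α} {S T : Finset α}

/-- The potential of the endgame, when no white vertex has two white neighbours: `16` for a white
vertex without white neighbour and `12` for one with a white neighbour. -/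
noncomputable def endgamePotential (G : SimpleGraph α) (S : Finset α) : ℕ :=
  whitePotential (fun _ => 16) (fun _ => 4) G S

lemma isCompatible_endgame (h : ∀ v, v ∉ S → whiteDeg G S v ≤ 1) :
    IsCompatible (fun _ => 16) (fun _ => 4) G S :=
  ⟨fun v hv => by have := h v hv; omega, fun _ _ _ _ _ => rfl⟩

lemma endgamePotential_of_mem (h : ∀ v, v ∉ S → whiteDeg G S v ≤ 1) (hST : S ⊆ T) {y : α}
    (hy : y ∉ S) (hyT : y ∈ T) :
    endgamePotential G T + 16 ≤ endgamePotential G S + 8 * whiteDeg G S y := by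
  have := (isCompatible_endgame h).whitePotential_of_mem hST hy hyT
  unfold endgamePotential
  omega

lemma isProfitableMove_endgame_of_pair (h : ∀ v, v ∉ S → whiteDeg G S v ≤ 1) {u v : α}
    (hu : u ∉ S) (hv : v ∉ S) (huv : G.Adj u v) :
    IsProfitableMove G (endgamePotential G) 24 8 S u := by
  refine ⟨not_closedNbr_subset (self_mem_closedNbr u) hu, ?_, fun q hq => ?_⟩
  · have hpair := (isCompatible_endgame h).whitePotential_of_adj subset_union_left hu
      (mem_union_right S (self_mem_closedNbr u)) hv
      (mem_union_right S (mem_closedNbr_of_adj huv)) huv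
    have := h u hu
    have := h v hv
    unfold endgamePotential
    omega
  · obtain ⟨y, hyq, hy⟩ := not_subset.mp hq
    have hT : ∀ v, v ∉ S ∪ closedNbr G u → whiteDeg G (S ∪ closedNbr G u) v ≤ 1 := fun v hv =>
      (whiteDeg_anti subset_union_left v).trans (h v fun hS => hv (mem_union_left _ hS))
    have := endgamePotential_of_mem hT subset_union_left hy (mem_union_right _ hyq)
    have := hT y hy
    omega

lemma isProfitableMove_endgame_of_isolated (h : ∀ v, v ∉ S → whiteDeg G S v = 0) {u : α}
    (hu : u ∉ S) : IsProfitableMove G (endgamePotential G) 16 16 S u := by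
  have hS : ∀ v, v ∉ S → whiteDeg G S v ≤ 1 := fun v hv => (h v hv).trans_le zero_le_one
  refine ⟨not_closedNbr_subset (self_mem_closedNbr u) hu, ?_, fun q hq => ?_⟩
  · have := endgamePotential_of_mem hS subset_union_left hu
      (mem_union_right S (self_mem_closedNbr (G := G) u))
    rw [h u hu] at this
    omega
  · obtain ⟨y, hyq, hy⟩ := not_subset.mp hq
    have hT : ∀ v, v ∉ S ∪ closedNbr G u → whiteDeg G (S ∪ closedNbr G u) v = 0 := fun v hv =>
      Nat.eq_zero_of_le_zero ((whiteDeg_anti subset_union_left v).trans_eq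
        (h v fun hS => hv (mem_union_left _ hS)))
    have := endgamePotential_of_mem (fun v hv => (hT v hv).trans_le zero_le_one)
      subset_union_left hy (mem_union_right _ hyq)
    rw [hT y hy] at this
    omega

variable [Fintype V] {H : Finset (Finset V)}

lemma domGameVal_le_endgamePotential {S : Finset V}
    (h : ∀ v, v ∉ S → whiteDeg (twoSection H) S v ≤ 1) :
    16 * domGameVal H true S ≤ endgamePotential (twoSection H) S := by
  refine mul_domGameVal_le_of_potential
    (Inv := fun S => ∀ v, v ∉ S → whiteDeg (twoSection H) S v ≤ 1)
    (fun S T hS hST v hv => (whiteDeg_anti hST v).trans (hS v fun hvS => hv (hST hvS)))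
    (fun S hS hne => Or.inr ?_) h
  by_cases hpair : ∃ u v, u ∉ S ∧ v ∉ S ∧ (twoSection H).Adj u v
  · obtain ⟨u, v, hu, hv, huv⟩ := hpair
    exact ⟨u, 24, 8, by simp, by simp, isProfitableMove_endgame_of_pair hS hu hv huv⟩
  · push Not at hpair
    obtain ⟨u, hu⟩ : ∃ u, u ∉ S := by simpa [eq_univ_iff_forall] using hne
    exact ⟨u, 16, 16, by simp, by simp, isProfitableMove_endgame_of_isolated (fun v hv =>
      whiteDeg_eq_zero.mpr fun w hw => by_contra fun hwS => hpair v w hv hwS hw) hu⟩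

end Endgame

section PendantPaths

variable {α : Type*} {G : SimpleGraph α} {S T : Finset α} {p u v w w' x : α}

/-- `x` is a white vertex whose only neighbour is `w`. -/
structure IsWhiteLeaf (G : SimpleGraph α) (S : Finset α) (w x : α) : Prop where
  adj : G.Adj w x
  notMem : x ∉ S
  eq_of_adj : ∀ z, G.Adj x z → z = w

/-- `w - u - v` is a pendant path at `w`: the vertices `u` and `v` are white, `v` is a leaf, and
`u` has no neighbour besides `w` and `v`. -/
structure IsPendantPath (G : SimpleGraph α) (S : Finset α) (w u v : α) : Prop where
  adj : G.Adj w u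
  isWhiteLeaf : IsWhiteLeaf G S u v
  ne : v ≠ w
  notMem : u ∉ S
  eq_or_eq_of_adj : ∀ z, G.Adj u z → z = w ∨ z = v

/-- `p` is one of the two white vertices of a pendant path at `w`. -/
def OnPendantPath (G : SimpleGraph α) (S : Finset α) (w p : α) : Prop :=
  ∃ u v, IsPendantPath G S w u v ∧ (p = u ∨ p = v)

lemma IsWhiteLeaf.anti (hST : S ⊆ T) (h : IsWhiteLeaf G T w x) : IsWhiteLeaf G S w x :=
  ⟨h.adj, fun hx => h.notMem (hST hx), h.eq_of_adj⟩

lemma IsPendantPath.anti (hST : S ⊆ T) (h : IsPendantPath G T w u v) : IsPendantPath G S w u v :=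
  ⟨h.adj, h.isWhiteLeaf.anti hST, h.ne, fun hu => h.notMem (hST hu), h.eq_or_eq_of_adj⟩

lemma OnPendantPath.notMem (h : OnPendantPath G S w p) : p ∉ S := by
  obtain ⟨u, v, hpath, rfl | rfl⟩ := h
  exacts [hpath.notMem, hpath.isWhiteLeaf.notMem]

lemma IsPendantPath.not_isPendantPath_leaf (h : IsPendantPath G S w u v) :
    ¬ IsPendantPath G S w' v x := fun h' =>
  h'.ne ((h.isWhiteLeaf.eq_of_adj x h'.isWhiteLeaf.adj).trans
    (h.isWhiteLeaf.eq_of_adj w' h'.adj.symm).symm)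

lemma IsPendantPath.base_unique {v' : α} (h : IsPendantPath G S w u v)
    (h' : IsPendantPath G S w' u v') (hw' : w' ∈ S) : w = w' :=
  ((h.eq_or_eq_of_adj w' h'.adj.symm).resolve_right fun hv =>
    h.isWhiteLeaf.notMem (hv ▸ hw')).symm

lemma OnPendantPath.base_unique (h : OnPendantPath G S w p) (h' : OnPendantPath G S w' p)
    (hw' : w' ∈ S) : w = w' := by
  obtain ⟨u, v, hpath, hp⟩ := h
  obtain ⟨u', v', hpath', hp'⟩ := h'
  rcases hp with rfl | rfl <;> rcases hp' with rfl | rfl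
  · exact hpath.base_unique hpath' hw'
  · exact (hpath'.not_isPendantPath_leaf hpath).elim
  · exact (hpath.not_isPendantPath_leaf hpath').elim
  · obtain rfl := hpath.isWhiteLeaf.eq_of_adj u' hpath'.isWhiteLeaf.adj.symm
    exact hpath.base_unique hpath' hw'

variable [Fintype α]

/-- The number of pendant paths at `w`. -/
noncomputable def pendantCount (G : SimpleGraph α) (S : Finset α) (w : α) : ℕ :=
  #{u | ∃ v, IsPendantPath G S w u v}

/-- `w` has a white leaf and at least one more white neighbour. -/
def IsSupport (G : SimpleGraph α) (S : Finset α) (w : α) : Prop :=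
  (∃ x, IsWhiteLeaf G S w x) ∧ 2 ≤ whiteDeg G S w

lemma IsPendantPath.whiteDeg_leaf (h : IsPendantPath G S w u v) : whiteDeg G S v = 1 := by
  have hle : whiteDeg G S v ≤ #{u} :=
    whiteDeg_le_card _ fun z hz _ => by simpa using h.isWhiteLeaf.eq_of_adj z hz
  have hpos : 0 < whiteDeg G S v := whiteDeg_pos.mpr ⟨u, h.isWhiteLeaf.adj.symm, h.notMem⟩
  rw [card_singleton] at hle
  omega

lemma IsPendantPath.whiteDeg_middle (h : IsPendantPath G S w u v) (hw : w ∈ S) :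
    whiteDeg G S u = 1 := by
  have hle : whiteDeg G S u ≤ #{v} := whiteDeg_le_card _ fun z hz hzS => by
    simpa using (h.eq_or_eq_of_adj z hz).resolve_left fun hzw => hzS (hzw ▸ hw)
  have hpos : 0 < whiteDeg G S u :=
    whiteDeg_pos.mpr ⟨v, h.isWhiteLeaf.adj, h.isWhiteLeaf.notMem⟩
  rw [card_singleton] at hle
  omega

lemma OnPendantPath.whiteDeg_eq_one (h : OnPendantPath G S w p) (hw : w ∈ S) :
    whiteDeg G S p = 1 := by
  obtain ⟨u, v, hpath, rfl | rfl⟩ := h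
  exacts [hpath.whiteDeg_middle hw, hpath.whiteDeg_leaf]

lemma OnPendantPath.whiteDeg_le_two (h : OnPendantPath G S w p) : whiteDeg G S p ≤ 2 := by
  obtain ⟨u, v, hpath, rfl | rfl⟩ := h
  · exact (whiteDeg_le_card {w, v} fun z hz _ => by
      simpa using hpath.eq_or_eq_of_adj z hz).trans card_le_two
  · exact hpath.whiteDeg_leaf.trans_le one_le_two

lemma IsPendantPath.of_not_onPendantPath (h : IsPendantPath G S w u v) (hpw : p ≠ w)
    (hp : ¬ OnPendantPath G S w p) : IsPendantPath G (S ∪ closedNbr G p) w u v := by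
  have hpu : p ≠ u := fun e => hp ⟨u, v, h, Or.inl e⟩
  have hpv : p ≠ v := fun e => hp ⟨u, v, h, Or.inr e⟩
  refine ⟨h.adj, ⟨h.isWhiteLeaf.adj, ?_, h.isWhiteLeaf.eq_of_adj⟩, h.ne, ?_, h.eq_or_eq_of_adj⟩
  · simp only [mem_union, mem_closedNbr, not_or]
    exact ⟨h.isWhiteLeaf.notMem, hpv.symm, fun e => hpu (h.isWhiteLeaf.eq_of_adj p e.symm)⟩
  · simp only [mem_union, mem_closedNbr, not_or]
    exact ⟨h.notMem, hpu.symm, fun e => (h.eq_or_eq_of_adj p e.symm).elim hpw hpv⟩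

lemma exists_isPendantPath (h : pendantCount G S w ≠ 0) : ∃ u v, IsPendantPath G S w u v := by
  obtain ⟨u, hu⟩ := card_ne_zero.mp h
  exact ⟨u, by simpa using hu⟩

lemma pendantCount_anti (hST : S ⊆ T) (w : α) : pendantCount G T w ≤ pendantCount G S w :=
  card_le_card <| monotone_filter_right _ fun _ _ ⟨v, hv⟩ => ⟨v, hv.anti hST⟩

lemma pendantCount_of_not_onPendantPath (hpw : p ≠ w) (hp : ¬ OnPendantPath G S w p) :
    pendantCount G (S ∪ closedNbr G p) w = pendantCount G S w :=
  (pendantCount_anti subset_union_left w).antisymm <| card_le_card <|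
    monotone_filter_right _ fun _ _ ⟨v, hv⟩ => ⟨v, hv.of_not_onPendantPath hpw hp⟩

lemma IsPendantPath.pendantCount_lt (h : IsPendantPath G S w u v) :
    pendantCount G (S ∪ closedNbr G u) w < pendantCount G S w := by
  refine card_lt_card ((ssubset_iff_of_subset ?_).mpr ⟨u, ?_, ?_⟩)
  · exact monotone_filter_right _ fun _ _ ⟨v, hv⟩ => ⟨v, hv.anti subset_union_left⟩
  · simpa using ⟨v, h⟩
  · simpa using fun v' (hv' : IsPendantPath G (S ∪ closedNbr G u) w u v') =>
      hv'.notMem (mem_union_right _ (self_mem_closedNbr u))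

lemma pendantCount_le_whiteDeg (w : α) : pendantCount G S w ≤ whiteDeg G S w :=
  card_le_whiteDeg _ fun u hu => by
    obtain ⟨v, hv⟩ := (mem_filter.mp hu).2
    exact ⟨hv.adj, hv.notMem⟩

lemma IsSupport.anti (hST : S ⊆ T) (h : IsSupport G T w) : IsSupport G S w :=
  ⟨h.1.imp fun _ hx => hx.anti hST, h.2.trans (whiteDeg_anti hST w)⟩

lemma IsPendantPath.isSupport_middle (h : IsPendantPath G S w u v) (hw : w ∉ S) :
    IsSupport G S u :=
  ⟨⟨v, h.isWhiteLeaf⟩, two_le_whiteDeg h.isWhiteLeaf.adj h.isWhiteLeaf.notMem h.adj.symm hw h.ne⟩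

end PendantPaths

section Opening

variable {α : Type*} [Fintype α] {G : SimpleGraph α} {S T K R : Finset α} {p q v w : α}

/-- The blue vertices of weight `8` in the opening: those having a white leaf and another white
neighbour, and those with exactly two pendant paths. -/
def IsSpecial (G : SimpleGraph α) (S : Finset α) (w : α) : Prop :=
  IsSupport G S w ∨ pendantCount G S w = 2

/-- The weight of a vertex in the opening: `10` for white vertices, `0` for blue vertices without
white neighbours, and `8` or `6` for the other blue vertices, special or not. -/
noncomputable def openingWeight (G : SimpleGraph α) (S : Finset α) (v : α) : ℕ :=
  if v ∉ S then 10 else if whiteDeg G S v = 0 then 0 else if IsSpecial G S v then 8 else 6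

/-- The potential of the opening. -/
noncomputable def openingPotential (G : SimpleGraph α) (S : Finset α) : ℕ :=
  ∑ v, openingWeight G S v

lemma not_isSpecial_of_whiteDeg_le_one (h : whiteDeg G S w ≤ 1) : ¬ IsSpecial G S w := by
  have := pendantCount_le_whiteDeg (G := G) (S := S) w
  rintro (⟨-, h2⟩ | h2) <;> omega

lemma openingWeight_of_notMem (h : v ∉ S) : openingWeight G S v = 10 := if_pos h

lemma openingWeight_of_whiteDeg_eq_zero (h : v ∈ S) (h0 : whiteDeg G S v = 0) :
    openingWeight G S v = 0 := by simp [openingWeight, h, h0]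

lemma openingWeight_closedNbr (S : Finset α) (p : α) :
    openingWeight G (S ∪ closedNbr G p) p = 0 :=
  openingWeight_of_whiteDeg_eq_zero (mem_union_right _ (self_mem_closedNbr p))
    (whiteDeg_closedNbr S p)

lemma openingWeight_le_ten (S : Finset α) (v : α) : openingWeight G S v ≤ 10 := by
  unfold openingWeight
  split_ifs <;> omega

lemma openingWeight_le_eight (h : v ∈ S) : openingWeight G S v ≤ 8 := by
  rw [openingWeight, if_neg (not_not_intro h)]
  split_ifs <;> omega

lemma openingWeight_le_six (h : v ∈ S) (hs : ¬ IsSpecial G S v) : openingWeight G S v ≤ 6 := by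
  rw [openingWeight, if_neg (not_not_intro h), if_neg hs]
  split_ifs <;> omega

lemma six_le_openingWeight (h : 0 < whiteDeg G S v) : 6 ≤ openingWeight G S v := by
  unfold openingWeight
  split_ifs <;> omega

lemma eight_le_openingWeight (h : 0 < whiteDeg G S v) (hs : IsSpecial G S v) :
    8 ≤ openingWeight G S v := by
  rw [openingWeight, if_neg h.ne', if_pos hs]
  split_ifs <;> omega

lemma openingWeight_union_closedNbr_le (p v : α) :
    openingWeight G (S ∪ closedNbr G p) v ≤
      openingWeight G S v + if v ∈ S ∧ OnPendantPath G S v p then 2 else 0 := by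
  by_cases hv : v ∈ S
  swap
  · rw [openingWeight_of_notMem hv]
    exact (openingWeight_le_ten _ v).trans (Nat.le_add_right _ _)
  rcases eq_or_ne p v with rfl | hpv
  · simp [openingWeight_closedNbr]
  have hv' : v ∈ S ∪ closedNbr G p := mem_union_left _ hv
  rcases Nat.eq_zero_or_pos (whiteDeg G (S ∪ closedNbr G p) v) with h0 | hpos
  · simp [openingWeight_of_whiteDeg_eq_zero hv' h0]
  have hposS : 0 < whiteDeg G S v := hpos.trans_le (whiteDeg_anti subset_union_left v)
  have hsix := six_le_openingWeight hposS
  by_cases hs : IsSpecial G (S ∪ closedNbr G p) v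
  swap
  · have := openingWeight_le_six hv' hs
    omega
  have height := openingWeight_le_eight (G := G) hv'
  by_cases hpath : OnPendantPath G S v p
  · rw [if_pos ⟨hv, hpath⟩]
    omega
  have hsS : IsSpecial G S v :=
    hs.imp (IsSupport.anti subset_union_left)
      (pendantCount_of_not_onPendantPath hpv hpath).symm.trans
  have := eight_le_openingWeight hposS hsS
  omega

lemma sum_onPendantPath_le (S : Finset α) (p : α) :
    (∑ v, if v ∈ S ∧ OnPendantPath G S v p then 2 else 0) ≤
      if ∃ b ∈ S, OnPendantPath G S b p then 2 else 0 := by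
  split_ifs with h
  · obtain ⟨b, hb, hbp⟩ := h
    refine (sum_le_sum (g := fun v => if v = b then 2 else 0) fun v _ => ?_).trans_eq (by simp)
    split_ifs with h1 h2 <;> first | omega | exact absurd (h1.2.base_unique hbp hb) h2
  · push Not at h
    simp +contextual [h]

/-- Dominator's and Staller's gains in the opening are all read off from this inequality: besides
its weight, `p` earns `2` for each white neighbour, `2` more for those in `R`, which do not become
special, and yet `6` more for those in `K`, which have no white neighbours left. Destroying
a pendant path at `b` may make `b` special, which costs `2`. -/
theorem openingPotential_union_closedNbr_le (hKR : K ⊆ R) (hR : R ⊆ G.neighborFinset p \ S)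
    (hRs : ∀ v ∈ R, ¬ IsSpecial G (S ∪ closedNbr G p) v)
    (hK : ∀ v ∈ K, whiteDeg G (S ∪ closedNbr G p) v = 0) :
    openingPotential G (S ∪ closedNbr G p) +
        (openingWeight G S p + 2 * whiteDeg G S p + 2 * #R + 6 * #K) ≤
      openingPotential G S + if ∃ b ∈ S, OnPendantPath G S b p then 2 else 0 := by
  have hpoint : ∀ v, openingWeight G (S ∪ closedNbr G p) v +
      ((if v = p then openingWeight G S p else 0) + (if v ∈ G.neighborFinset p \ S then 2 else 0) +
        (if v ∈ R then 2 else 0) + if v ∈ K then 6 else 0) ≤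
      openingWeight G S v + if v ∈ S ∧ OnPendantPath G S v p then 2 else 0 := by
    intro v
    by_cases hv : v ∈ G.neighborFinset p \ S
    · obtain ⟨hpv, hvS⟩ : G.Adj p v ∧ v ∉ S := by simpa using hv
      have hvT : v ∈ S ∪ closedNbr G p := mem_union_right _ (mem_closedNbr_of_adj hpv)
      rw [openingWeight_of_notMem hvS, if_neg hpv.ne', if_pos hv]
      by_cases hvK : v ∈ K
      · simp [openingWeight_of_whiteDeg_eq_zero hvT (hK v hvK), hvK, hKR hvK]
      by_cases hvR : v ∈ R
      · have := openingWeight_le_six hvT (hRs v hvR)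
        rw [if_pos hvR, if_neg hvK]
        omega
      · have := openingWeight_le_eight (G := G) hvT
        rw [if_neg hvR, if_neg hvK]
        omega
    · rw [if_neg hv, if_neg fun h => hv (hR h), if_neg fun h => hv (hR (hKR h))]
      rcases eq_or_ne v p with rfl | hvp
      · simp [openingWeight_closedNbr]
      · simpa [hvp] using openingWeight_union_closedNbr_le p v
  have hsum := (sum_add_sum_le_sum_add_sum hpoint).trans
    (Nat.add_le_add_left (sum_onPendantPath_le S p) _)
  simp only [sum_add_distrib, sum_ite_eq', mem_univ, if_true, sum_ite_mem, univ_inter, sum_const,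
    smul_eq_mul, ← whiteDeg.eq_def] at hsum
  unfold openingPotential
  omega

end Opening

section OpeningMoves

variable {α : Type*} [Fintype α] {G : SimpleGraph α} {S T K R : Finset α} {n : ℕ}
  {b p q u v w x y : α}

/-- Every legal move lowers the opening potential by less than `n`. -/
def IsQuiet (n : ℕ) (G : SimpleGraph α) (S : Finset α) : Prop :=
  ∀ p, ¬ closedNbr G p ⊆ S → openingPotential G S < openingPotential G (S ∪ closedNbr G p) + n

/-- `y` is a white vertex whose white neighbours are exactly the middles of its three pendant
paths. -/
def IsSpiderCenter (G : SimpleGraph α) (S : Finset α) (y : α) : Prop :=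
  y ∉ S ∧ pendantCount G S y = 3 ∧ whiteDeg G S y = 3

lemma not_onPendantPath_of_whiteDeg_ne_one (h : whiteDeg G S p ≠ 1) :
    ∀ b ∈ S, ¬ OnPendantPath G S b p := fun _ hb hp => h (hp.whiteDeg_eq_one hb)

lemma openingPotential_gain (hp : ∀ b ∈ S, ¬ OnPendantPath G S b p) (hKR : K ⊆ R)
    (hR : R ⊆ G.neighborFinset p \ S) (hRs : ∀ v ∈ R, ¬ IsSpecial G (S ∪ closedNbr G p) v)
    (hK : ∀ v ∈ K, whiteDeg G (S ∪ closedNbr G p) v = 0) :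
    openingPotential G (S ∪ closedNbr G p) +
      (openingWeight G S p + 2 * whiteDeg G S p + 2 * #R + 6 * #K) ≤ openingPotential G S := by
  have h := openingPotential_union_closedNbr_le hKR hR hRs hK
  rwa [if_neg (by simpa using hp)] at h

lemma IsQuiet.gain_lt (h : IsQuiet n G S) (hlegal : ¬ closedNbr G p ⊆ S)
    (hp : ∀ b ∈ S, ¬ OnPendantPath G S b p) (hKR : K ⊆ R)
    (hR : R ⊆ G.neighborFinset p \ S) (hRs : ∀ v ∈ R, ¬ IsSpecial G (S ∪ closedNbr G p) v)
    (hK : ∀ v ∈ K, whiteDeg G (S ∪ closedNbr G p) v = 0) :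
    openingWeight G S p + 2 * whiteDeg G S p + 2 * #R + 6 * #K < n := by
  have := openingPotential_gain hp hKR hR hRs hK
  have := h p hlegal
  omega

lemma IsWhiteLeaf.whiteDeg_union_closedNbr (h : IsWhiteLeaf G S b x) :
    whiteDeg G (S ∪ closedNbr G b) x = 0 :=
  whiteDeg_eq_zero.mpr fun z hz => by
    rw [h.eq_of_adj z hz]
    exact mem_union_right _ (self_mem_closedNbr b)

lemma openingPotential_of_onPendantPath (hb : b ∈ S) (hq : OnPendantPath G S b q) :
    openingPotential G (S ∪ closedNbr G q) + 18 ≤ openingPotential G S := by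
  obtain ⟨r, hqr, hr, hfin⟩ : ∃ r, G.Adj q r ∧ r ∉ S ∧ whiteDeg G (S ∪ closedNbr G q) r = 0 := by
    obtain ⟨u, v, h, rfl | rfl⟩ := hq
    · exact ⟨v, h.isWhiteLeaf.adj, h.isWhiteLeaf.notMem, h.isWhiteLeaf.whiteDeg_union_closedNbr⟩
    · refine ⟨u, h.isWhiteLeaf.adj.symm, h.notMem, whiteDeg_eq_zero.mpr fun z hz => ?_⟩
      rcases h.eq_or_eq_of_adj z hz with rfl | rfl
      exacts [mem_union_left _ hb, mem_union_right _ (self_mem_closedNbr z)]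
  have h := openingPotential_union_closedNbr_le (G := G) (S := S) (p := q) (Subset.refl {r})
    (by simp [hqr, hr])
    (by simpa using not_isSpecial_of_whiteDeg_le_one (hfin.trans_le zero_le_one))
    (by simpa using hfin)
  rw [openingWeight_of_notMem hq.notMem, hq.whiteDeg_eq_one hb, card_singleton,
    if_pos ⟨b, hb, hq⟩] at h
  omega

lemma openingPotential_reply (hq : ¬ closedNbr G q ⊆ S) :
    openingPotential G (S ∪ closedNbr G q) + 10 ≤ openingPotential G S ∨
      openingPotential G (S ∪ closedNbr G q) + 8 ≤ openingPotential G S ∧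
        q ∈ S ∧ ∃ w, G.Adj q w ∧ w ∉ S ∧ IsSpecial G (S ∪ closedNbr G q) w := by
  by_cases hpath : ∃ b ∈ S, OnPendantPath G S b q
  · obtain ⟨b, hb, hbq⟩ := hpath
    have := openingPotential_of_onPendantPath hb hbq
    omega
  push Not at hpath
  by_cases hqS : q ∈ S
  swap
  · have := openingPotential_gain hpath (empty_subset ∅) (by simp) (by simp) (by simp)
    rw [openingWeight_of_notMem hqS] at this
    omega
  obtain ⟨w, hwq, hw⟩ := not_subset.mp hq
  have hqw : G.Adj q w := (mem_closedNbr.mp hwq).resolve_left fun h => hw (h ▸ hqS)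
  have hpos : 0 < whiteDeg G S q := whiteDeg_pos.mpr ⟨w, hqw, hw⟩
  have hsix := six_le_openingWeight hpos
  by_cases hs : IsSpecial G (S ∪ closedNbr G q) w
  · have := openingPotential_gain hpath (empty_subset ∅) (by simp) (by simp) (by simp)
    exact Or.inr ⟨by omega, hqS, w, hqw, hw, hs⟩
  · have := openingPotential_gain (R := {w}) hpath (empty_subset _) (by simp [hqw, hw])
      (by simpa using hs) (by simp)
    rw [card_singleton] at this
    omega

lemma openingPotential_reply_eight (hq : ¬ closedNbr G q ⊆ S) :
    openingPotential G (S ∪ closedNbr G q) + 8 ≤ openingPotential G S := by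
  rcases openingPotential_reply hq with h | h <;> omega

lemma exists_isSupport_of_isSpecial (hST : S ⊆ T) (hw : w ∉ S) (h : IsSpecial G T w) :
    ∃ b ∉ S, IsSupport G S b := by
  rcases h with h | h
  · exact ⟨w, hw, h.anti hST⟩
  · obtain ⟨u, v, hpath⟩ := exists_isPendantPath (by omega : pendantCount G T w ≠ 0)
    have hpathS := hpath.anti hST
    exact ⟨u, hpathS.notMem, hpathS.isSupport_middle hw⟩

lemma IsQuiet.whiteDeg_eq_two_of_isSupport (h : IsQuiet 24 G S) (hb : b ∉ S)
    (hsupp : IsSupport G S b) : whiteDeg G S b = 2 := by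
  obtain ⟨⟨x, hx⟩, hdeg⟩ := hsupp
  have hfin := hx.whiteDeg_union_closedNbr
  have := h.gain_lt (not_closedNbr_subset (self_mem_closedNbr b) hb)
    (not_onPendantPath_of_whiteDeg_ne_one (by omega)) (Subset.refl {x})
    (by simp [hx.adj, hx.notMem])
    (by simpa using not_isSpecial_of_whiteDeg_le_one (hfin.trans_le zero_le_one))
    (by simpa using hfin)
  rw [openingWeight_of_notMem hb, card_singleton] at this
  omega

lemma IsQuiet.isSpecial_of_isWhiteLeaf (h : IsQuiet 24 G S) (hb : b ∉ S)
    (hx : IsWhiteLeaf G S b x) (hby : G.Adj b y) (hy : y ∉ S) (hxy : x ≠ y) :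
    IsSpecial G (S ∪ closedNbr G b) y := by
  by_contra hns
  have hdeg := two_le_whiteDeg hx.adj hx.notMem hby hy hxy
  have := h.gain_lt (K := {x}) (R := {x, y})
    (not_closedNbr_subset (self_mem_closedNbr b) hb)
    (not_onPendantPath_of_whiteDeg_ne_one (by omega)) (by simp)
    (by simp [insert_subset_iff, hx.adj, hx.notMem, hby, hy])
    (by simpa [hns] using
      not_isSpecial_of_whiteDeg_le_one (hx.whiteDeg_union_closedNbr.trans_le zero_le_one))
    (by simpa using hx.whiteDeg_union_closedNbr)
  rw [openingWeight_of_notMem hb, card_pair hxy, card_singleton] at this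
  omega

lemma IsQuiet.pendantCount_eq_two_of_isWhiteLeaf (h : IsQuiet 24 G S) (hb : b ∉ S)
    (hx : IsWhiteLeaf G S b x) (hby : G.Adj b y) (hy : y ∉ S) (hxy : x ≠ y) :
    pendantCount G (S ∪ closedNbr G b) y = 2 := by
  refine (h.isSpecial_of_isWhiteLeaf hb hx hby hy hxy).resolve_left fun hsupp => ?_
  have hdeg := h.whiteDeg_eq_two_of_isSupport hy (hsupp.anti subset_union_left)
  have hlt := whiteDeg_lt_of_adj (T := S ∪ closedNbr G b) hby.symm hb subset_union_left
    (mem_union_right _ (self_mem_closedNbr b))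
  have := hsupp.2
  omega

lemma openingPotential_of_three_le_pendantCount (hy : y ∉ S) (h : 3 ≤ pendantCount G S y) :
    openingPotential G (S ∪ closedNbr G y) + (10 + 2 * whiteDeg G S y + 2 * pendantCount G S y) ≤
      openingPotential G S := by
  have hdeg := pendantCount_le_whiteDeg (G := G) (S := S) y
  have hpath : ∀ b ∈ S, ¬ OnPendantPath G S b y :=
    not_onPendantPath_of_whiteDeg_ne_one (by omega)
  have hR : ({u | ∃ v, IsPendantPath G S y u v} : Finset α) ⊆ G.neighborFinset y \ S := by
    intro u hu
    obtain ⟨v, hv⟩ := (mem_filter.mp hu).2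
    simp [hv.adj, hv.notMem]
  have hRs : ∀ u ∈ ({u | ∃ v, IsPendantPath G S y u v} : Finset α),
      ¬ IsSpecial G (S ∪ closedNbr G y) u := by
    intro u hu
    obtain ⟨v, hv⟩ := (mem_filter.mp hu).2
    refine not_isSpecial_of_whiteDeg_le_one ((whiteDeg_le_card {v} fun z hz hzT => ?_).trans_eq
      (card_singleton v))
    refine mem_singleton.mpr ((hv.eq_or_eq_of_adj z hz).resolve_left ?_)
    rintro rfl
    exact hzT (mem_union_right _ (self_mem_closedNbr z))
  have hgain := openingPotential_gain (K := ∅) hpath (empty_subset _) hR hRs (by simp)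
  rwa [openingWeight_of_notMem hy, card_empty, mul_zero, add_zero, ← pendantCount.eq_def]
    at hgain

lemma IsQuiet.exists_isSpiderCenter (h : IsQuiet 24 G S) (hb : b ∉ S)
    (hsupp : IsSupport G S b) : ∃ x y, IsPendantPath G S y b x ∧ IsSpiderCenter G S y := by
  have hb2 := h.whiteDeg_eq_two_of_isSupport hb hsupp
  obtain ⟨x, hx⟩ := hsupp.1
  obtain ⟨y, hyx, hby, hy⟩ := exists_white_adj_ne x hb2.ge
  have hcount := h.pendantCount_eq_two_of_isWhiteLeaf hb hx hby hy hyx.symm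
  obtain ⟨u, v, hpathT⟩ := exists_isPendantPath (hcount.trans_ne two_ne_zero)
  have hpath := hpathT.anti subset_union_left
  have hcount' := h.pendantCount_eq_two_of_isWhiteLeaf hpath.notMem hpath.isWhiteLeaf
    hpath.adj.symm hy hpath.ne
  have hlt := hpath.pendantCount_lt
  have hcenter := openingPotential_of_three_le_pendantCount (G := G) hy (by omega)
  have hquiet := h y (not_closedNbr_subset (self_mem_closedNbr y) hy)
  have hle := pendantCount_le_whiteDeg (G := G) (S := S) y
  have hon : OnPendantPath G S y b := by
    by_contra hon
    have := pendantCount_of_not_onPendantPath (G := G) (S := S) hby.ne hon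
    omega
  obtain ⟨b', x', hpath', rfl | rfl⟩ := hon
  · exact ⟨x', y, hpath', hy, by omega, by omega⟩
  · have := hpath'.whiteDeg_leaf
    omega

lemma IsSpiderCenter.openingPotential_reply (hy : IsSpiderCenter G S y)
    (hcenters : ∀ b ∉ S, IsSupport G S b →
      ∃ x y, IsPendantPath G S y b x ∧ IsSpiderCenter G S y)
    (hq : ¬ closedNbr G q ⊆ S ∪ closedNbr G y) :
    openingPotential G (S ∪ closedNbr G y ∪ closedNbr G q) + 10 ≤
      openingPotential G (S ∪ closedNbr G y) := by
  rcases _root_.openingPotential_reply hq with hten | ⟨-, hqT, w, hqw, hw, hs⟩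
  · exact hten
  exfalso
  have hsub : S ⊆ S ∪ closedNbr G y ∪ closedNbr G q :=
    subset_union_left.trans subset_union_left
  have hwS : w ∉ S := fun h => hw (mem_union_left _ h)
  rcases hs with hsupp | hcount
  · obtain ⟨x₀, y₀, hpath, -⟩ := hcenters w hwS (hsupp.anti hsub)
    have hq' : q ∈ ({y₀, x₀} : Finset α) := by simpa using hpath.eq_or_eq_of_adj q hqw.symm
    have hdeg := whiteDeg_le_card (G := G) (S := S ∪ closedNbr G y ∪ closedNbr G q) (v := w)
      (({y₀, x₀} : Finset α).erase q) fun z hz hzT => by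
        have hzq : z ≠ q := fun hzq => hzT (mem_union_left _ (by rwa [hzq]))
        simpa [hzq] using hpath.eq_or_eq_of_adj z hz
    rw [card_erase_of_mem hq'] at hdeg
    have := hsupp.2
    have := card_le_two (a := y₀) (b := x₀)
    omega
  · obtain ⟨u, v, hpathT⟩ := exists_isPendantPath (hcount.trans_ne two_ne_zero)
    have hpath := hpathT.anti hsub
    obtain ⟨x₀, y₀, hpath₀, hy₀⟩ := hcenters u hpath.notMem (hpath.isSupport_middle hwS)
    obtain rfl : y₀ = w := (hpath.eq_or_eq_of_adj y₀ hpath₀.adj.symm).resolve_right fun hv => by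
      have := hpath.whiteDeg_leaf
      have := hy₀.2.2
      simp_all
    have hyw : y ≠ y₀ := by
      rintro rfl
      exact hw (mem_union_right _ (self_mem_closedNbr y))
    have hcount₁ := pendantCount_of_not_onPendantPath (G := G) (S := S) hyw fun hon => by
      have := hon.whiteDeg_le_two
      have := hy.2.2
      omega
    have hcount₂ := pendantCount_of_not_onPendantPath (G := G) hqw.ne fun hon => hon.notMem hqT
    have := hy₀.2.1
    omega

/-- The situation in which the middle game starts: white vertices induce paths and cycles in which
the ends of an edge have equal degree, and each blue vertex sees few of them. -/
structure IsThin (G : SimpleGraph α) (S : Finset α) : Prop where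
  whiteDeg_le_two : ∀ v, v ∉ S → whiteDeg G S v ≤ 2
  whiteDeg_eq_two : ∀ u v, u ∉ S → v ∉ S → G.Adj u v → whiteDeg G S u = 2 → whiteDeg G S v = 2
  whiteDeg_le_three : ∀ b ∈ S, whiteDeg G S b ≤ 3
  whiteDeg_le_two_of_isolated : ∀ b ∈ S, ∀ x, x ∉ S → G.Adj b x → whiteDeg G S x = 0 →
    whiteDeg G S b ≤ 2
  isolated_unique : ∀ b ∈ S, ∀ x y, x ∉ S → y ∉ S → G.Adj b x → G.Adj b y →
    whiteDeg G S x = 0 → whiteDeg G S y = 0 → x = y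
  whiteDeg_eq_one_of_isWhiteLeaf : ∀ b ∈ S, ∀ x, IsWhiteLeaf G S b x → whiteDeg G S b = 1
  not_adj_of_adj : ∀ b ∈ S, ∀ u v, u ∉ S → v ∉ S → G.Adj u v → whiteDeg G S u = 1 →
    G.Adj b u → ¬ G.Adj b v

lemma IsQuiet.four_mul_whiteDeg_lt (h : IsQuiet n G S) (hsupp : ∀ b, b ∉ S → ¬ IsSupport G S b)
    (hlegal : ¬ closedNbr G p ⊆ S) (hp : ∀ b ∈ S, ¬ OnPendantPath G S b p)
    (hK : ∀ v ∈ K, (G.Adj p v ∧ v ∉ S) ∧ whiteDeg G (S ∪ closedNbr G p) v = 0) :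
    openingWeight G S p + 4 * whiteDeg G S p + 6 * #K < n := by
  have hRs : ∀ v ∈ G.neighborFinset p \ S, ¬ IsSpecial G (S ∪ closedNbr G p) v :=
    fun v hv hs => by
      obtain ⟨b, hb, hbs⟩ := exists_isSupport_of_isSpecial subset_union_left (mem_sdiff.mp hv).2 hs
      exact hsupp b hb hbs
  have := h.gain_lt hlegal hp (fun v hv => by simpa using (hK v hv).1) Subset.rfl hRs
    fun v hv => (hK v hv).2
  rw [← whiteDeg.eq_def] at this
  omega

lemma IsQuiet.four_mul_whiteDeg_lt_of_notMem (h : IsQuiet n G S)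
    (hsupp : ∀ b, b ∉ S → ¬ IsSupport G S b) (hp : p ∉ S) (hdeg : whiteDeg G S p ≠ 1)
    (hK : ∀ v ∈ K, (G.Adj p v ∧ v ∉ S) ∧ whiteDeg G (S ∪ closedNbr G p) v = 0) :
    10 + 4 * whiteDeg G S p + 6 * #K < n := by
  rw [← openingWeight_of_notMem (G := G) hp]
  exact h.four_mul_whiteDeg_lt hsupp (not_closedNbr_subset (self_mem_closedNbr p) hp)
    (not_onPendantPath_of_whiteDeg_ne_one hdeg) hK

lemma IsQuiet.four_mul_whiteDeg_lt_of_mem (h : IsQuiet n G S)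
    (hsupp : ∀ b, b ∉ S → ¬ IsSupport G S b) (hb : b ∈ S) (hpos : 0 < whiteDeg G S b)
    (hK : ∀ v ∈ K, (G.Adj b v ∧ v ∉ S) ∧ whiteDeg G (S ∪ closedNbr G b) v = 0) :
    openingWeight G S b + 4 * whiteDeg G S b + 6 * #K < n := by
  obtain ⟨u, hbu, hu⟩ := whiteDeg_pos.mp hpos
  exact h.four_mul_whiteDeg_lt hsupp (not_closedNbr_subset (mem_closedNbr_of_adj hbu) hu)
    (fun _ _ hpath => hpath.notMem hb) hK

lemma IsQuiet.whiteDeg_eq_two_of_adj (h : IsQuiet 22 G S)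
    (hsupp : ∀ b, b ∉ S → ¬ IsSupport G S b) (u v : α) (hu : u ∉ S) (hv : v ∉ S)
    (huv : G.Adj u v) (hdu : whiteDeg G S u = 2) : whiteDeg G S v = 2 := by
  by_contra hne
  have hdv := h.four_mul_whiteDeg_lt_of_notMem (K := ∅) (p := v) hsupp hv
  have hpos : 0 < whiteDeg G S v := whiteDeg_pos.mpr ⟨u, huv.symm, hu⟩
  have hfin : whiteDeg G (S ∪ closedNbr G u) v = 0 := by
    have := whiteDeg_lt_of_adj (T := S ∪ closedNbr G u) huv.symm hu subset_union_left
      (mem_union_right _ (self_mem_closedNbr u))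
    by_cases hone : whiteDeg G S v = 1
    · omega
    · have := hdv hone (by simp)
      omega
  have := h.four_mul_whiteDeg_lt_of_notMem (K := {v}) hsupp hu (by omega)
    (by simpa [huv, hv] using hfin)
  rw [card_singleton] at this
  omega

lemma IsQuiet.not_adj_of_adj (h : IsQuiet 22 G S) (hsupp : ∀ b, b ∉ S → ¬ IsSupport G S b)
    (b : α) (hb : b ∈ S) (u v : α) (hu : u ∉ S) (hv : v ∉ S) (huv : G.Adj u v)
    (hdu : whiteDeg G S u = 1) (hbu : G.Adj b u) : ¬ G.Adj b v := by
  intro hbv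
  have hdeg := two_le_whiteDeg hbu hu hbv hv huv.ne
  have hpos : 0 < whiteDeg G S b := by omega
  have hdv : whiteDeg G S v ≤ 1 := by
    by_contra! hdv
    have := h.four_mul_whiteDeg_lt_of_notMem (K := ∅) (p := v) hsupp hv (by omega) (by simp)
    have := h.whiteDeg_eq_two_of_adj hsupp v u hv hu huv.symm (by omega)
    omega
  have hfu := whiteDeg_lt_of_adj (T := S ∪ closedNbr G b) huv hv subset_union_left
    (mem_union_right _ (mem_closedNbr_of_adj hbv))
  have hfv := whiteDeg_lt_of_adj (T := S ∪ closedNbr G b) huv.symm hu subset_union_left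
    (mem_union_right _ (mem_closedNbr_of_adj hbu))
  have hK : ∀ w ∈ ({u, v} : Finset α), (G.Adj b w ∧ w ∉ S) ∧
      whiteDeg G (S ∪ closedNbr G b) w = 0 := by
    simp only [mem_insert, mem_singleton, forall_eq_or_imp, forall_eq]
    exact ⟨⟨⟨hbu, hu⟩, by omega⟩, ⟨hbv, hv⟩, by omega⟩
  have := h.four_mul_whiteDeg_lt_of_mem hsupp hb hpos hK
  have := six_le_openingWeight hpos
  rw [card_pair huv.ne] at *
  omega

lemma IsQuiet.isolated_unique (h : IsQuiet 22 G S) (hsupp : ∀ b, b ∉ S → ¬ IsSupport G S b)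
    (b : α) (hb : b ∈ S) (x y : α) (hx : x ∉ S) (hy : y ∉ S) (hbx : G.Adj b x) (hby : G.Adj b y)
    (hdx : whiteDeg G S x = 0) (hdy : whiteDeg G S y = 0) : x = y := by
  by_contra hxy
  have hdeg := two_le_whiteDeg hbx hx hby hy hxy
  have hpos : 0 < whiteDeg G S b := by omega
  have := h.four_mul_whiteDeg_lt_of_mem (K := {x, y}) hsupp hb hpos
    (by simp [hbx, hx, hby, hy, whiteDeg_union_eq_zero, hdx, hdy])
  have := six_le_openingWeight hpos
  rw [card_pair hxy] at *
  omega

lemma IsQuiet.whiteDeg_eq_one_of_isWhiteLeaf (h : IsQuiet 22 G S)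
    (hsupp : ∀ b, b ∉ S → ¬ IsSupport G S b) (b : α) (hb : b ∈ S) (x : α)
    (hx : IsWhiteLeaf G S b x) : whiteDeg G S b = 1 := by
  have hpos : 0 < whiteDeg G S b := whiteDeg_pos.mpr ⟨x, hx.adj, hx.notMem⟩
  by_contra hne
  have := h.four_mul_whiteDeg_lt_of_mem (K := {x}) hsupp hb hpos
    (by simpa [hx.adj, hx.notMem] using hx.whiteDeg_union_closedNbr)
  have := eight_le_openingWeight hpos (Or.inl ⟨⟨x, hx⟩, by omega⟩)
  rw [card_singleton] at *
  omega

lemma IsQuiet.isThin (h : IsQuiet 22 G S) (hsupp : ∀ b, b ∉ S → ¬ IsSupport G S b) :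
    IsThin G S where
  whiteDeg_le_two p hp := by
    by_contra! hdeg
    have := h.four_mul_whiteDeg_lt_of_notMem (K := ∅) hsupp hp (by omega) (by simp)
    omega
  whiteDeg_eq_two := h.whiteDeg_eq_two_of_adj hsupp
  whiteDeg_le_three b hb := by
    by_contra! hdeg
    have := h.four_mul_whiteDeg_lt_of_mem (K := ∅) hsupp hb (by omega) (by simp)
    have := six_le_openingWeight (G := G) (S := S) (v := b) (by omega)
    omega
  whiteDeg_le_two_of_isolated b hb x hx hbx hdx := by
    by_contra! hdeg
    have hpos : 0 < whiteDeg G S b := by omega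
    have := h.four_mul_whiteDeg_lt_of_mem (K := {x}) hsupp hb hpos
      (by simpa [hbx, hx] using whiteDeg_union_eq_zero _ hdx)
    have := six_le_openingWeight hpos
    rw [card_singleton] at *
    omega
  isolated_unique := h.isolated_unique hsupp
  whiteDeg_eq_one_of_isWhiteLeaf := h.whiteDeg_eq_one_of_isWhiteLeaf hsupp
  not_adj_of_adj := h.not_adj_of_adj hsupp

end OpeningMoves

section MiddleGame

variable {α : Type*} [Fintype α] {G : SimpleGraph α} {S₀ S T : Finset α} {b p q u v w x y : α}

/-- A white vertex at the start `S₀` of the middle game, without white neighbour, all of whose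
neighbours have a second white neighbour at that time. -/
def IsShared (G : SimpleGraph α) (S₀ : Finset α) (x : α) : Prop :=
  x ∉ S₀ ∧ whiteDeg G S₀ x = 0 ∧ ∀ b, G.Adj x b → whiteDeg G S₀ b ≠ 1

/-- The white vertex `u` had exactly one white neighbour at the start `S₀` of the middle game, and
it still has. -/
def IsPaired (G : SimpleGraph α) (S₀ S : Finset α) (u : α) : Prop :=
  u ∉ S ∧ whiteDeg G S₀ u = 1 ∧ whiteDeg G S u = 1

/-- `uv` is an edge between paired vertices; it is then a component of the white subgraph. -/
structure IsPair (G : SimpleGraph α) (S₀ S : Finset α) (u v : α) : Prop where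
  adj : G.Adj u v
  left : IsPaired G S₀ S u
  right : IsPaired G S₀ S v

/-- The paired neighbours of `b`. -/
noncomputable def pairNbrs (G : SimpleGraph α) (S₀ S : Finset α) (b : α) : Finset α :=
  {u | G.Adj b u ∧ IsPaired G S₀ S u}

/-- The number of paired neighbours of `b`. -/
noncomputable def pairDeg (G : SimpleGraph α) (S₀ S : Finset α) (b : α) : ℕ :=
  #(pairNbrs G S₀ S b)

/-- `b` has a white neighbour that had two white neighbours at the start `S₀` of the middle game
and still has at least one. For a thin `S₀`, such vertices belong to cycles of white vertices. -/
def SeesCycle (G : SimpleGraph α) (S₀ S : Finset α) (b : α) : Prop :=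
  ∃ u, G.Adj b u ∧ u ∉ S ∧ whiteDeg G S₀ u = 2 ∧ 0 < whiteDeg G S u

/-- `b` has a white neighbour that is shared at the start `S₀` of the middle game. -/
def SeesShared (G : SimpleGraph α) (S₀ S : Finset α) (b : α) : Prop :=
  ∃ x, G.Adj b x ∧ x ∉ S ∧ IsShared G S₀ x

/-- The base weight of a white vertex in the middle game. -/
noncomputable def middleBase (G : SimpleGraph α) (S₀ : Finset α) (v : α) : ℕ :=
  if IsShared G S₀ v then 14 else 16

/-- The discount of a white vertex in the middle game for each of its white neighbours. -/
noncomputable def middleRate (G : SimpleGraph α) (S₀ : Finset α) (v : α) : ℕ :=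
  if whiteDeg G S₀ v = 2 then 3 else if whiteDeg G S₀ v = 1 then 6 else 0

/-- The total weight of the white vertices in the middle game. -/
noncomputable def middleWhitePotential (G : SimpleGraph α) (S₀ S : Finset α) : ℕ :=
  whitePotential (middleBase G S₀) (middleRate G S₀) G S

/-- The weight in the middle game of a vertex that was blue at its start `S₀`. The other blue
vertices are weightless. -/
noncomputable def blueWeight (G : SimpleGraph α) (S₀ S : Finset α) (b : α) : ℕ :=
  if b ∉ S₀ then 0
  else if 2 ≤ pairDeg G S₀ S b then if pendantCount G S b = 2 then 8 else 6
  else if pairDeg G S₀ S b = 1 ∨ SeesCycle G S₀ S b then 4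
  else if SeesShared G S₀ S b then 2 else 0

/-- The total weight of the blue vertices in the middle game. -/
noncomputable def bluePotential (G : SimpleGraph α) (S₀ S : Finset α) : ℕ :=
  ∑ b, blueWeight G S₀ S b

/-- The potential of the middle game started at `S₀`. -/
noncomputable def middlePotential (G : SimpleGraph α) (S₀ S : Finset α) : ℕ :=
  middleWhitePotential G S₀ S + bluePotential G S₀ S

lemma IsPaired.anti (h : IsPaired G S₀ T u) (hS : S₀ ⊆ S) (hST : S ⊆ T) : IsPaired G S₀ S u := by
  obtain ⟨hu, h₀, h1⟩ := h
  refine ⟨fun hS => hu (hST hS), h₀, le_antisymm ?_ ?_⟩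
  exacts [h₀ ▸ whiteDeg_anti hS u, h1 ▸ whiteDeg_anti hST u]

lemma mem_pairNbrs : u ∈ pairNbrs G S₀ S b ↔ G.Adj b u ∧ IsPaired G S₀ S u := by
  simp [pairNbrs]

lemma pairDeg_anti (hS : S₀ ⊆ S) (hST : S ⊆ T) (b : α) : pairDeg G S₀ T b ≤ pairDeg G S₀ S b :=
  card_le_card <| monotone_filter_right _ fun _ _ h => ⟨h.1, h.2.anti hS hST⟩

lemma SeesCycle.anti (h : SeesCycle G S₀ T b) (hST : S ⊆ T) : SeesCycle G S₀ S b := by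
  obtain ⟨u, hbu, hu, h₀, hpos⟩ := h
  exact ⟨u, hbu, fun hS => hu (hST hS), h₀, hpos.trans_le (whiteDeg_anti hST u)⟩

lemma SeesShared.anti (h : SeesShared G S₀ T b) (hST : S ⊆ T) : SeesShared G S₀ S b := by
  obtain ⟨x, hbx, hx, hshared⟩ := h
  exact ⟨x, hbx, fun hS => hx (hST hS), hshared⟩

lemma pairDeg_pos (hbu : G.Adj b u) (hu : IsPaired G S₀ S u) : 0 < pairDeg G S₀ S b :=
  card_pos.mpr ⟨u, mem_pairNbrs.mpr ⟨hbu, hu⟩⟩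

lemma blueWeight_of_notMem (hb : b ∉ S₀) : blueWeight G S₀ S b = 0 := if_pos hb

lemma six_le_blueWeight (hb : b ∈ S₀) (h : 2 ≤ pairDeg G S₀ S b) : 6 ≤ blueWeight G S₀ S b := by
  rw [blueWeight, if_neg (not_not_intro hb), if_pos h]
  split_ifs <;> omega

lemma four_le_blueWeight (hb : b ∈ S₀) (h : 1 ≤ pairDeg G S₀ S b ∨ SeesCycle G S₀ S b) :
    4 ≤ blueWeight G S₀ S b := by
  grind [blueWeight]

lemma two_le_blueWeight (hb : b ∈ S₀) (h : SeesShared G S₀ S b) : 2 ≤ blueWeight G S₀ S b := by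
  grind [blueWeight]

lemma blueWeight_closedNbr (S : Finset α) (p : α) :
    blueWeight G S₀ (S ∪ closedNbr G p) p = 0 := by
  have hmem : ∀ u, G.Adj p u → u ∈ S ∪ closedNbr G p := fun u h =>
    mem_union_right _ (mem_closedNbr_of_adj h)
  have hpair : pairDeg G S₀ (S ∪ closedNbr G p) p = 0 := by
    refine card_eq_zero.mpr (eq_empty_of_forall_notMem fun u hu => ?_)
    exact (mem_pairNbrs.mp hu).2.1 (hmem u (mem_pairNbrs.mp hu).1)
  have hcycle : ¬ SeesCycle G S₀ (S ∪ closedNbr G p) p := fun ⟨u, hpu, hu, _⟩ => hu (hmem u hpu)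
  have hshared : ¬ SeesShared G S₀ (S ∪ closedNbr G p) p := fun ⟨u, hpu, hu, _⟩ => hu (hmem u hpu)
  simp [blueWeight, hpair, hcycle, hshared]

lemma blueWeight_union_closedNbr_le (hS : S₀ ⊆ S) (p b : α) :
    blueWeight G S₀ (S ∪ closedNbr G p) b ≤
      blueWeight G S₀ S b + if b ∈ S₀ ∧ OnPendantPath G S b p then 2 else 0 := by
  by_cases hb : b ∈ S₀
  swap
  · simp [blueWeight_of_notMem hb]
  rcases eq_or_ne p b with rfl | hpb
  · simp [blueWeight_closedNbr]
  have hpair := pairDeg_anti (G := G) hS (subset_union_left (s₂ := closedNbr G p)) b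
  have hcycle : SeesCycle G S₀ (S ∪ closedNbr G p) b → SeesCycle G S₀ S b :=
    fun h => h.anti subset_union_left
  have hshared : SeesShared G S₀ (S ∪ closedNbr G p) b → SeesShared G S₀ S b :=
    fun h => h.anti subset_union_left
  by_cases hpath : OnPendantPath G S b p
  · grind [blueWeight]
  · grind [blueWeight, pendantCount_of_not_onPendantPath hpb hpath]

lemma bluePotential_union_closedNbr_le (hS : S₀ ⊆ S) (hp : ∀ b ∈ S₀, ¬ OnPendantPath G S b p) :
    bluePotential G S₀ (S ∪ closedNbr G p) ≤ bluePotential G S₀ S :=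
  sum_le_sum fun b _ => (blueWeight_union_closedNbr_le hS p b).trans_eq <| by
    rw [if_neg fun h => hp b h.1 h.2, add_zero]

lemma bluePotential_union_closedNbr_le_add_two (hS : S₀ ⊆ S) (p : α) :
    bluePotential G S₀ (S ∪ closedNbr G p) ≤ bluePotential G S₀ S + 2 := by
  have hpoint : ∀ b, blueWeight G S₀ (S ∪ closedNbr G p) b ≤
      blueWeight G S₀ S b + if b ∈ S ∧ OnPendantPath G S b p then 2 else 0 := fun b =>
    (blueWeight_union_closedNbr_le hS p b).trans (Nat.add_le_add_left (by grind) _)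
  have hsum := sum_le_sum fun b (_ : b ∈ univ) => hpoint b
  rw [sum_add_distrib] at hsum
  refine hsum.trans (Nat.add_le_add_left ((sum_onPendantPath_le S p).trans ?_) _)
  split_ifs <;> omega

lemma bluePotential_of_mem (hS : S₀ ⊆ S) (hq : q ∈ S) :
    bluePotential G S₀ (S ∪ closedNbr G q) + blueWeight G S₀ S q ≤ bluePotential G S₀ S :=
  sum_add_le_sum_of_subset {q}
    (fun b => (blueWeight_union_closedNbr_le hS q b).trans_eq <| by
      rw [if_neg fun h => h.2.notMem hq, add_zero])
    (by simp [blueWeight_closedNbr])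

lemma IsPendantPath.isPaired (h : IsPendantPath G S b u v) (hS : S₀ ⊆ S) (hb : b ∈ S₀) :
    IsPaired G S₀ S u ∧ IsPaired G S₀ S v :=
  ⟨⟨h.notMem, (h.anti hS).whiteDeg_middle hb, h.whiteDeg_middle (hS hb)⟩,
    ⟨h.isWhiteLeaf.notMem, (h.anti hS).whiteDeg_leaf, h.whiteDeg_leaf⟩⟩

lemma OnPendantPath.isPaired (h : OnPendantPath G S b p) (hS : S₀ ⊆ S) (hb : b ∈ S₀) :
    IsPaired G S₀ S p := by
  obtain ⟨u, v, hpath, rfl | rfl⟩ := h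
  exacts [(hpath.isPaired hS hb).1, (hpath.isPaired hS hb).2]

lemma pendantCount_le_pairDeg (hS : S₀ ⊆ S) (hb : b ∈ S₀) :
    pendantCount G S b ≤ pairDeg G S₀ S b :=
  card_le_card <| monotone_filter_right _ fun _ _ ⟨_, hv⟩ => ⟨hv.adj, (hv.isPaired hS hb).1⟩

lemma IsPaired.mem_of_adj (h : IsPaired G S₀ S u) (hS : S₀ ⊆ S) (huz : G.Adj u w) (hw : w ∈ S) :
    w ∈ S₀ := by
  by_contra hw₀
  obtain ⟨v, huv, hv⟩ := whiteDeg_pos.mp (h.2.2.symm ▸ one_pos : 0 < whiteDeg G S u)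
  exact hv (eq_of_whiteDeg_le_one h.2.1.le huz hw₀ huv (fun hv₀ => hv (hS hv₀)) ▸ hw)

lemma IsThin.exists_isPair (h : IsThin G S₀) (hS : S₀ ⊆ S) (hpaired : IsPaired G S₀ S u) :
    ∃ v, IsPair G S₀ S u v := by
  have ⟨hu, hu₀, hu1⟩ := hpaired
  obtain ⟨v, huv, hv⟩ := whiteDeg_pos.mp (hu1.symm ▸ one_pos : 0 < whiteDeg G S u)
  have hv₀ : v ∉ S₀ := fun hv₀ => hv (hS hv₀)
  have hpos : 0 < whiteDeg G S v := whiteDeg_pos.mpr ⟨u, huv.symm, hu⟩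
  have hanti := whiteDeg_anti (G := G) hS v
  have hle := h.whiteDeg_le_two v hv₀
  have htwo := h.whiteDeg_eq_two v u hv₀ (fun hu₀ => hu (hS hu₀)) huv.symm
  exact ⟨v, huv, hpaired, hv, by omega, by omega⟩

lemma middleRate_mul_whiteDeg_le (hS : S₀ ⊆ S) (v : α) :
    2 * (middleRate G S₀ v * whiteDeg G S v) ≤ 12 := by
  have := whiteDeg_anti (G := G) hS v
  unfold middleRate
  split_ifs <;> omega

lemma fourteen_le_middleBase (v : α) : 14 ≤ middleBase G S₀ v := by
  unfold middleBase
  split_ifs <;> omega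

lemma middleBase_of_whiteDeg_ne_zero (h : whiteDeg G S₀ v ≠ 0) : middleBase G S₀ v = 16 :=
  if_neg fun hshared => h hshared.2.1

lemma IsThin.isCompatible (h : IsThin G S₀) (hS : S₀ ⊆ S) :
    IsCompatible (middleBase G S₀) (middleRate G S₀) G S := by
  refine IsCompatible.mono ⟨fun v _ => ?_, fun u v hu hv huv => ?_⟩ hS
  · have := fourteen_le_middleBase (G := G) (S₀ := S₀) v
    have := middleRate_mul_whiteDeg_le (G := G) (Subset.refl S₀) v
    omega
  · have hposu : 0 < whiteDeg G S₀ u := whiteDeg_pos.mpr ⟨v, huv, hv⟩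
    have hposv : 0 < whiteDeg G S₀ v := whiteDeg_pos.mpr ⟨u, huv.symm, hu⟩
    have hle := h.whiteDeg_le_two u hu
    have hle' := h.whiteDeg_le_two v hv
    have htwo := h.whiteDeg_eq_two u v hu hv huv
    have htwo' := h.whiteDeg_eq_two v u hv hu huv.symm
    have : whiteDeg G S₀ u = whiteDeg G S₀ v := by omega
    rw [middleRate, middleRate, this]

lemma IsThin.middleWhitePotential_of_mem (h : IsThin G S₀) (hS : S₀ ⊆ S) (hST : S ⊆ T)
    (hy : y ∉ S) (hyT : y ∈ T) :
    middleWhitePotential G S₀ T + 4 ≤ middleWhitePotential G S₀ S := by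
  have hgain := (h.isCompatible hS).whitePotential_of_mem hST hy hyT
  have hle := middleRate_mul_whiteDeg_le (G := G) hS y
  rcases eq_or_ne (whiteDeg G S₀ y) 0 with h0 | h0
  · have hzero := Nat.eq_zero_of_le_zero ((whiteDeg_anti (G := G) hS y).trans_eq h0)
    have hbase := fourteen_le_middleBase (G := G) (S₀ := S₀) y
    rw [hzero, mul_zero] at hgain
    unfold middleWhitePotential
    omega
  · rw [middleBase_of_whiteDeg_ne_zero h0] at hgain
    unfold middleWhitePotential
    omega

lemma IsThin.middleWhitePotential_of_whiteDeg_eq_zero (h : IsThin G S₀) (hS : S₀ ⊆ S)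
    (hST : S ⊆ T) (hy : y ∉ S) (hyT : y ∈ T) (h0 : whiteDeg G S y = 0) :
    middleWhitePotential G S₀ T + 14 ≤ middleWhitePotential G S₀ S := by
  have hgain := (h.isCompatible hS).whitePotential_of_mem hST hy hyT
  have hbase := fourteen_le_middleBase (G := G) (S₀ := S₀) y
  rw [h0, mul_zero] at hgain
  unfold middleWhitePotential
  omega

lemma IsThin.middleWhitePotential_of_whiteDeg_lt (h : IsThin G S₀) (hS : S₀ ⊆ S)
    (hST : S ⊆ T) (hy : y ∉ S) (hyT : y ∈ T) (hlt : whiteDeg G S y < whiteDeg G S₀ y) :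
    middleWhitePotential G S₀ T + 10 ≤ middleWhitePotential G S₀ S := by
  have hgain := (h.isCompatible hS).whitePotential_of_mem hST hy hyT
  have htwo := h.whiteDeg_le_two y fun hy₀ => hy (hS hy₀)
  rw [middleBase_of_whiteDeg_ne_zero (by omega)] at hgain
  have : 2 * (middleRate G S₀ y * whiteDeg G S y) ≤ 6 := by
    unfold middleRate
    split_ifs <;> omega
  unfold middleWhitePotential
  omega

lemma IsThin.middleWhitePotential_of_adj (h : IsThin G S₀) (hS : S₀ ⊆ S) (hST : S ⊆ T)
    (hu : u ∉ S) (huT : u ∈ T) (hv : v ∉ S) (hvT : v ∈ T) (huv : G.Adj u v) :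
    middleWhitePotential G S₀ T + 32 + 2 * middleRate G S₀ u ≤ middleWhitePotential G S₀ S +
      2 * (middleRate G S₀ u * (whiteDeg G S u + whiteDeg G S v)) := by
  have hu₀ : u ∉ S₀ := fun hu₀ => hu (hS hu₀)
  have hv₀ : v ∉ S₀ := fun hv₀ => hv (hS hv₀)
  have hgain := (h.isCompatible hS).whitePotential_of_adj hST hu huT hv hvT huv
  rw [middleBase_of_whiteDeg_ne_zero (whiteDeg_pos.mpr ⟨v, huv, hv₀⟩).ne',
    middleBase_of_whiteDeg_ne_zero (whiteDeg_pos.mpr ⟨u, huv.symm, hu₀⟩).ne',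
    ← (h.isCompatible Subset.rfl).eq_of_adj u v hu₀ hv₀ huv] at hgain
  rw [mul_add]
  unfold middleWhitePotential
  omega

lemma IsThin.middleWhitePotential_of_isPaired (h : IsThin G S₀) (hS : S₀ ⊆ S)
    (hu : IsPaired G S₀ S u) :
    middleWhitePotential G S₀ (S ∪ closedNbr G u) + 20 ≤ middleWhitePotential G S₀ S := by
  obtain ⟨v, huv, -, hv⟩ := h.exists_isPair hS hu
  have hgain := h.middleWhitePotential_of_adj hS (subset_union_left (s₂ := closedNbr G u)) hu.1
    (mem_union_right _ (self_mem_closedNbr u)) hv.1 (mem_union_right _ (mem_closedNbr_of_adj huv))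
    huv
  rw [hu.2.2, hv.2.2, show middleRate G S₀ u = 6 by simp [middleRate, hu.2.1]] at hgain
  omega

lemma IsThin.middlePotential_of_blue (h : IsThin G S₀) (hS : S₀ ⊆ S) (hqS : q ∈ S)
    (hqy : G.Adj q y) (hy : y ∉ S) :
    middlePotential G S₀ (S ∪ closedNbr G q) + 8 ≤ middlePotential G S₀ S := by
  have hy₀ : y ∉ S₀ := fun hy₀ => hy (hS hy₀)
  have hyT : y ∈ S ∪ closedNbr G q := mem_union_right _ (mem_closedNbr_of_adj hqy)
  have hblue := bluePotential_of_mem (G := G) hS hqS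
  unfold middlePotential
  rcases (whiteDeg_anti (G := G) hS y).lt_or_eq with hlt | heq
  · have := h.middleWhitePotential_of_whiteDeg_lt hS subset_union_left hy hyT hlt
    omega
  rcases eq_or_ne (whiteDeg G S y) 0 with h0 | h0
  · have := h.middleWhitePotential_of_whiteDeg_eq_zero hS subset_union_left hy hyT h0
    omega
  have hq₀ : q ∈ S₀ := by
    by_contra hq₀
    exact (whiteDeg_lt_of_adj hqy.symm hq₀ hS hqS).ne heq
  have htwo := h.whiteDeg_le_two y hy₀
  have hfour : 4 ≤ blueWeight G S₀ S q := four_le_blueWeight hq₀ <| by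
    rcases eq_or_ne (whiteDeg G S₀ y) 2 with h2 | h2
    · exact Or.inr ⟨y, hqy, hy, h2, Nat.pos_of_ne_zero h0⟩
    · exact Or.inl (pairDeg_pos hqy ⟨hy, by omega, by omega⟩)
  have := h.middleWhitePotential_of_mem hS subset_union_left hy hyT
  omega

lemma IsThin.middleWhitePotential_of_white (h : IsThin G S₀) (hS : S₀ ⊆ S) (hq : q ∉ S) :
    middleWhitePotential G S₀ (S ∪ closedNbr G q) + 14 ≤ middleWhitePotential G S₀ S := by
  have hqT : q ∈ S ∪ closedNbr G q := mem_union_right _ (self_mem_closedNbr q)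
  rcases eq_or_ne (whiteDeg G S q) 0 with h0 | h0
  · exact h.middleWhitePotential_of_whiteDeg_eq_zero hS subset_union_left hq hqT h0
  obtain ⟨y, hqy, hy⟩ := whiteDeg_pos.mp (Nat.pos_of_ne_zero h0)
  have hgain := h.middleWhitePotential_of_adj hS subset_union_left hq hqT hy
    (mem_union_right _ (mem_closedNbr_of_adj hqy)) hqy
  have hqle := whiteDeg_anti (G := G) hS q
  have hyle := whiteDeg_anti (G := G) hS y
  have hy2 := h.whiteDeg_le_two y fun hy₀ => hy (hS hy₀)
  have htwo := h.whiteDeg_eq_two y q (fun hy₀ => hy (hS hy₀)) (fun hq₀ => hq (hS hq₀)) hqy.symm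
  unfold middleRate at hgain
  split_ifs at hgain <;> omega

lemma IsThin.middlePotential_reply_eight (h : IsThin G S₀) (hS : S₀ ⊆ S)
    (hq : ¬ closedNbr G q ⊆ S) :
    middlePotential G S₀ (S ∪ closedNbr G q) + 8 ≤ middlePotential G S₀ S := by
  by_cases hqS : q ∈ S
  · obtain ⟨y, hyq, hy⟩ := not_subset.mp hq
    exact h.middlePotential_of_blue hS hqS (adj_of_mem_closedNbr hyq hy hqS) hy
  · have hwhite := h.middleWhitePotential_of_white hS hqS
    have hblue := bluePotential_union_closedNbr_le_add_two (G := G) hS q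
    unfold middlePotential
    omega

/-- Every undominated cycle vertex is isolated among the white vertices, and a vertex with a single
paired neighbour also sees a shared vertex. -/
structure IsPairStage (G : SimpleGraph α) (S₀ S : Finset α) : Prop where
  whiteDeg_eq_zero : ∀ v, v ∉ S → whiteDeg G S₀ v = 2 → whiteDeg G S v = 0
  seesShared : ∀ b ∈ S₀, pairDeg G S₀ S b = 1 → SeesShared G S₀ S b

lemma IsPairStage.isPaired (hstage : IsPairStage G S₀ S) (h : IsThin G S₀) (hS : S₀ ⊆ S)
    (hy : y ∉ S) (h0 : whiteDeg G S y ≠ 0) : IsPaired G S₀ S y := by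
  have hle := whiteDeg_anti (G := G) hS y
  have htwo := h.whiteDeg_le_two y fun hy₀ => hy (hS hy₀)
  have hcycle := hstage.whiteDeg_eq_zero y hy
  exact ⟨hy, by omega, by omega⟩

lemma IsPairStage.middlePotential_reply (hstage : IsPairStage G S₀ S) (h : IsThin G S₀)
    (hS : S₀ ⊆ S) (hq : ¬ closedNbr G q ⊆ S) :
    middlePotential G S₀ (S ∪ closedNbr G q) + 14 ≤ middlePotential G S₀ S := by
  unfold middlePotential
  by_cases hqQ : IsPaired G S₀ S q
  · have := h.middleWhitePotential_of_isPaired hS hqQ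
    have := bluePotential_union_closedNbr_le_add_two (G := G) hS q
    omega
  have hblue := bluePotential_union_closedNbr_le hS fun b hb hbq => hqQ (hbq.isPaired hS hb)
  by_cases hpaired : ∀ y, y ∈ closedNbr G q → y ∉ S → whiteDeg G S y ≠ 0
  swap
  · push Not at hpaired
    obtain ⟨y, hyq, hy, h0⟩ := hpaired
    have := h.middleWhitePotential_of_whiteDeg_eq_zero hS subset_union_left hy
      (mem_union_right _ hyq) h0
    omega
  have hqS : q ∈ S := by
    by_contra hqS
    exact hqQ (hstage.isPaired h hS hqS (hpaired q (self_mem_closedNbr q) hqS))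
  obtain ⟨y, hyq, hy⟩ := not_subset.mp hq
  have hqy := adj_of_mem_closedNbr hyq hy hqS
  have hyQ := hstage.isPaired h hS hy (hpaired y hyq hy)
  have hq₀ : q ∈ S₀ := hyQ.mem_of_adj hS hqy.symm hqS
  have hpos := pairDeg_pos hqy hyQ
  have hone : pairDeg G S₀ S q ≠ 1 := by
    intro hone
    obtain ⟨x, hqx, hx, hshared⟩ := hstage.seesShared q hq₀ hone
    have hle := whiteDeg_anti (G := G) hS x
    exact hpaired x (mem_closedNbr_of_adj hqx) hx (by have := hshared.2.1; omega)
  obtain ⟨z, hz, hzy⟩ := exists_mem_ne (by omega : 1 < pairDeg G S₀ S q) y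
  obtain ⟨hqz, hzQ⟩ := mem_pairNbrs.mp hz
  have hgain := h.middleWhitePotential_of_mem hS (subset_insert y S) hy (mem_insert_self y S)
  have hgain' := h.middleWhitePotential_of_mem (hS.trans (subset_insert y S))
    (insert_subset (mem_union_right _ hyq) subset_union_left) (by simp [hzQ.1, hzy])
    (mem_union_right S (mem_closedNbr_of_adj hqz))
  have hsix := six_le_blueWeight hq₀ (by omega : 2 ≤ pairDeg G S₀ S q)
  have := bluePotential_of_mem (G := G) hS hqS
  omega

lemma IsThin.middleWhitePotential_of_whiteDeg_eq_two (h : IsThin G S₀) (hS : S₀ ⊆ S) (hv : v ∉ S)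
    (hv2 : whiteDeg G S v = 2) :
    middleWhitePotential G S₀ (S ∪ closedNbr G v) + 24 ≤ middleWhitePotential G S₀ S := by
  obtain ⟨a, hva, ha⟩ := whiteDeg_pos.mp (hv2.symm ▸ two_pos : 0 < whiteDeg G S v)
  obtain ⟨b, hba, hvb, hb⟩ := exists_white_adj_ne a hv2.ge
  have hlt : ∀ w T, G.Adj v w → insert v S ⊆ T → whiteDeg G T w < whiteDeg G S₀ w :=
    fun w T hvw hT => whiteDeg_lt_of_adj hvw.symm (fun hv₀ => hv (hS hv₀))
      (hS.trans ((subset_insert v S).trans hT)) (hT (mem_insert_self v S))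
  have hS₁ := hS.trans (subset_insert v S)
  have hgainv := h.middleWhitePotential_of_mem hS (subset_insert v S) hv (mem_insert_self v S)
  have hgaina := h.middleWhitePotential_of_whiteDeg_lt hS₁ (subset_insert a _)
    (by simp [ha, hva.ne']) (mem_insert_self a _) (hlt a _ hva Subset.rfl)
  have hgainb := h.middleWhitePotential_of_whiteDeg_lt (T := S ∪ closedNbr G v)
    (hS₁.trans (subset_insert a _))
    (insert_subset (mem_union_right _ (mem_closedNbr_of_adj hva))
      (insert_subset (mem_union_right _ (self_mem_closedNbr v)) subset_union_left))
    (by simp [hb, hvb.ne', hba]) (mem_union_right _ (mem_closedNbr_of_adj hvb))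
    (hlt b _ hvb (subset_insert a _))
  omega

lemma IsThin.exists_cycle_move (h : IsThin G S₀) (hS : S₀ ⊆ S)
    (hcycle : ∃ v, v ∉ S ∧ whiteDeg G S₀ v = 2 ∧ whiteDeg G S v ≠ 0) :
    ∃ p, p ∉ S ∧
      middlePotential G S₀ (S ∪ closedNbr G p) + 24 ≤ middlePotential G S₀ S := by
  suffices hwhite : ∃ p, p ∉ S ∧ whiteDeg G S₀ p = 2 ∧
      middleWhitePotential G S₀ (S ∪ closedNbr G p) + 24 ≤ middleWhitePotential G S₀ S by
    obtain ⟨p, hp, hp2, hgain⟩ := hwhite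
    have hblue : bluePotential G S₀ (S ∪ closedNbr G p) ≤ bluePotential G S₀ S :=
      bluePotential_union_closedNbr_le hS fun b hb hbp => by
        have := (hbp.isPaired hS hb).2.1
        omega
    exact ⟨p, hp, by unfold middlePotential; omega⟩
  by_cases htwo : ∃ v, v ∉ S ∧ whiteDeg G S₀ v = 2 ∧ whiteDeg G S v = 2
  · obtain ⟨v, hv, hv₀, hv2⟩ := htwo
    exact ⟨v, hv, hv₀, h.middleWhitePotential_of_whiteDeg_eq_two hS hv hv2⟩
  push Not at htwo
  obtain ⟨v, hv, hv₀, hpos⟩ := hcycle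
  obtain ⟨a, hva, ha⟩ := whiteDeg_pos.mp (Nat.pos_of_ne_zero hpos)
  have ha₀ := h.whiteDeg_eq_two v a (fun hv₀ => hv (hS hv₀)) (fun ha₀ => ha (hS ha₀)) hva hv₀
  have hvle := whiteDeg_anti (G := G) hS v
  have hale := whiteDeg_anti (G := G) hS a
  have hv2 := htwo v hv hv₀
  have ha2 := htwo a ha ha₀
  have hgain := h.middleWhitePotential_of_adj hS (subset_union_left (s₂ := closedNbr G v)) hv
    (mem_union_right _ (self_mem_closedNbr v)) ha (mem_union_right _ (mem_closedNbr_of_adj hva)) hva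
  rw [show middleRate G S₀ v = 3 by simp [middleRate, hv₀]] at hgain
  exact ⟨v, hv, hv₀, by omega⟩

lemma IsPair.symm (h : IsPair G S₀ S u v) : IsPair G S₀ S v u := ⟨h.adj.symm, h.right, h.left⟩

lemma IsPair.eq_of_adj (h : IsPair G S₀ S u v) (huw : G.Adj u w) (hw : w ∉ S) : w = v :=
  eq_of_whiteDeg_le_one h.left.2.2.le huw hw h.adj h.right.1

lemma IsPair.isPaired_union_closedNbr (h : IsPair G S₀ S u v) (hthin : IsThin G S₀) (hS : S₀ ⊆ S)
    (hw : IsPaired G S₀ S w) (hwu : w ≠ u) (hwv : w ≠ v) :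
    IsPaired G S₀ (S ∪ closedNbr G u) w := by
  obtain ⟨z, hwz⟩ := hthin.exists_isPair hS hw
  have hwT : w ∉ S ∪ closedNbr G u := by
    simp only [mem_union, mem_closedNbr, not_or]
    exact ⟨hw.1, hwu, fun huw => hwv (h.eq_of_adj huw hw.1)⟩
  have hzT : z ∉ S ∪ closedNbr G u := by
    simp only [mem_union, mem_closedNbr, not_or]
    refine ⟨hwz.right.1, ?_, fun huz => ?_⟩
    · rintro rfl
      exact hwv (h.eq_of_adj hwz.adj.symm hw.1)
    · obtain rfl := h.eq_of_adj huz hwz.right.1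
      exact hwu (h.symm.eq_of_adj hwz.adj.symm hw.1)
  refine ⟨hwT, hw.2.1, le_antisymm ?_ (whiteDeg_pos.mpr ⟨z, hwz.adj, hzT⟩)⟩
  exact (whiteDeg_anti subset_union_left w).trans hw.2.2.le

lemma IsPair.not_adj (h : IsPair G S₀ S u v) (hthin : IsThin G S₀) (hS : S₀ ⊆ S) (hb : b ∈ S₀)
    (hbu : G.Adj b u) : ¬ G.Adj b v :=
  hthin.not_adj_of_adj b hb u v (fun hu => h.left.1 (hS hu)) (fun hv => h.right.1 (hS hv)) h.adj
    h.left.2.1 hbu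

lemma IsPair.pairDeg_of_adj (h : IsPair G S₀ S u v) (hthin : IsThin G S₀) (hS : S₀ ⊆ S)
    (hb : b ∈ S₀) (hadj : G.Adj b u ∨ G.Adj b v) :
    pairDeg G S₀ (S ∪ closedNbr G u) b + 1 = pairDeg G S₀ S b := by
  obtain ⟨t, ht, hbt, hother⟩ : ∃ t, (t = u ∨ t = v) ∧ G.Adj b t ∧
      ∀ s, (s = u ∨ s = v) → G.Adj b s → s = t := by
    rcases hadj with hbu | hbv
    · refine ⟨u, Or.inl rfl, hbu, ?_⟩
      rintro s (rfl | rfl) hbs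
      exacts [rfl, (h.not_adj hthin hS hb hbu hbs).elim]
    · refine ⟨v, Or.inr rfl, hbv, ?_⟩
      rintro s (rfl | rfl) hbs
      exacts [(h.not_adj hthin hS hb hbs hbv).elim, rfl]
  have htQ : IsPaired G S₀ S t := by
    rcases ht with rfl | rfl
    exacts [h.left, h.right]
  have htT : t ∈ S ∪ closedNbr G u := mem_union_right _ <| by
    rcases ht with rfl | rfl
    exacts [self_mem_closedNbr _, mem_closedNbr_of_adj h.adj]
  have herase : pairNbrs G S₀ (S ∪ closedNbr G u) b = (pairNbrs G S₀ S b).erase t := by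
    ext s
    simp only [mem_erase, mem_pairNbrs]
    refine ⟨fun ⟨hbs, hs⟩ => ⟨?_, hbs, hs.anti hS subset_union_left⟩, fun ⟨hst, hbs, hs⟩ => ?_⟩
    · rintro rfl
      exact hs.1 htT
    · exact ⟨hbs, h.isPaired_union_closedNbr hthin hS hs (fun e => hst (hother s (.inl e) hbs))
        fun e => hst (hother s (.inr e) hbs)⟩
  rw [pairDeg, pairDeg, herase, card_erase_add_one (mem_pairNbrs.mpr ⟨hbt, htQ⟩)]

lemma IsPair.pairDeg_of_not_adj (h : IsPair G S₀ S u v) (hthin : IsThin G S₀) (hS : S₀ ⊆ S)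
    (hbu : ¬ G.Adj b u) (hbv : ¬ G.Adj b v) :
    pairDeg G S₀ (S ∪ closedNbr G u) b = pairDeg G S₀ S b := by
  refine (pairDeg_anti hS subset_union_left b).antisymm (card_le_card fun s hs => ?_)
  obtain ⟨hbs, hs⟩ := mem_pairNbrs.mp hs
  refine mem_pairNbrs.mpr ⟨hbs, h.isPaired_union_closedNbr hthin hS hs ?_ ?_⟩
  · rintro rfl
    exact hbu hbs
  · rintro rfl
    exact hbv hbs

lemma IsPair.eq_of_onPendantPath (h : IsPair G S₀ S u v) (hS : S₀ ⊆ S) (hw : w ∈ S₀)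
    (hwu : OnPendantPath G S w u) (hb : b ∈ S₀) (hadj : G.Adj b u ∨ G.Adj b v) : b = w := by
  have hmiddle : ∀ s t, IsPendantPath G S w s t → G.Adj b s ∨ G.Adj b t → b = w := by
    rintro s t hpath (hbs | hbt)
    · exact (hpath.eq_or_eq_of_adj b hbs.symm).resolve_right fun e =>
        hpath.isWhiteLeaf.notMem (e ▸ hS hb)
    · exact absurd (hS hb) (hpath.isWhiteLeaf.eq_of_adj b hbt.symm ▸ hpath.notMem)
  obtain ⟨s, t, hpath, rfl | rfl⟩ := hwu
  · obtain rfl : v = t := (hpath.eq_or_eq_of_adj v h.adj).resolve_left fun e =>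
      h.right.1 (e ▸ hS hw)
    exact hmiddle _ _ hpath hadj
  · obtain rfl : v = s := hpath.isWhiteLeaf.eq_of_adj v h.adj
    exact hmiddle _ _ hpath hadj.symm

lemma IsPair.blueWeight_le (h : IsPair G S₀ S u v) (hS : S₀ ⊆ S) (hb : b ∈ S₀)
    (hadj : G.Adj b u ∨ G.Adj b v)
    (hle : blueWeight G S₀ (S ∪ closedNbr G u) b ≤ blueWeight G S₀ S b) (w : α) :
    blueWeight G S₀ (S ∪ closedNbr G u) w ≤ blueWeight G S₀ S w := by
  by_cases hpath : w ∈ S₀ ∧ OnPendantPath G S w u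
  · rwa [← h.eq_of_onPendantPath hS hpath.1 hpath.2 hb hadj]
  · exact (blueWeight_union_closedNbr_le hS u w).trans_eq (by rw [if_neg hpath, add_zero])

lemma IsPair.bluePotential_of_adj (h : IsPair G S₀ S u v) (hS : S₀ ⊆ S) (hb : b ∈ S₀)
    (hadj : G.Adj b u ∨ G.Adj b v)
    (hgain : blueWeight G S₀ (S ∪ closedNbr G u) b + 4 ≤ blueWeight G S₀ S b) :
    bluePotential G S₀ (S ∪ closedNbr G u) + 4 ≤ bluePotential G S₀ S :=
  sum_add_le_sum_of_subset {b} (h.blueWeight_le hS hb hadj (by omega)) (by simpa using hgain)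

lemma not_seesCycle (hcycle : ∀ v, v ∉ S → whiteDeg G S₀ v = 2 → whiteDeg G S v = 0)
    (hST : S ⊆ T) (b : α) : ¬ SeesCycle G S₀ T b := fun hb => by
  obtain ⟨u, -, hu, hu2, hpos⟩ := hb.anti hST
  exact hpos.ne' (hcycle u hu hu2)

lemma IsPair.blueWeight_of_adj (h : IsPair G S₀ S u v) (hthin : IsThin G S₀) (hS : S₀ ⊆ S)
    (hcycle : ∀ v, v ∉ S → whiteDeg G S₀ v = 2 → whiteDeg G S v = 0) (hb : b ∈ S₀)
    (hadj : G.Adj b u ∨ G.Adj b v) (hle : pairDeg G S₀ S b ≤ 2) :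
    blueWeight G S₀ (S ∪ closedNbr G u) b + 2 ≤ blueWeight G S₀ S b := by
  have hdeg := h.pairDeg_of_adj hthin hS hb hadj
  have hno := not_seesCycle hcycle (subset_union_left (s₂ := closedNbr G u)) b
  grind [blueWeight]

lemma IsThin.isPairStage (h : IsThin G S₀) (hS : S₀ ⊆ S)
    (hcycle : ∀ v, v ∉ S → whiteDeg G S₀ v = 2 → whiteDeg G S v = 0)
    (hgain : ∀ u, IsPaired G S₀ S u →
      bluePotential G S₀ S < bluePotential G S₀ (S ∪ closedNbr G u) + 4) :
    IsPairStage G S₀ S where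
  whiteDeg_eq_zero := hcycle
  seesShared b hb hone := by
    by_contra hshared
    obtain ⟨u, hu⟩ := card_pos.mp (hone.symm ▸ one_pos : 0 < pairDeg G S₀ S b)
    obtain ⟨hbu, hu⟩ := mem_pairNbrs.mp hu
    obtain ⟨v, huv⟩ := h.exists_isPair hS hu
    have hdeg := huv.pairDeg_of_adj h hS hb (Or.inl hbu)
    have hno := not_seesCycle hcycle (subset_union_left (s₂ := closedNbr G u)) b
    have hshared' : ¬ SeesShared G S₀ (S ∪ closedNbr G u) b := fun h =>
      hshared (h.anti subset_union_left)
    have := huv.bluePotential_of_adj hS hb (Or.inl hbu) (by grind [blueWeight])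
    have := hgain u hu
    omega

lemma IsPair.isPairStage_union_closedNbr (h : IsPair G S₀ S u v) (hthin : IsThin G S₀)
    (hS : S₀ ⊆ S) (hstage : IsPairStage G S₀ S)
    (hne : ∀ b ∈ S₀, (G.Adj b u ∨ G.Adj b v) → pairDeg G S₀ S b ≠ 2) :
    IsPairStage G S₀ (S ∪ closedNbr G u) where
  whiteDeg_eq_zero w hw hw2 := Nat.eq_zero_of_le_zero <|
    (whiteDeg_anti subset_union_left w).trans_eq <|
      hstage.whiteDeg_eq_zero w (fun hwS => hw (mem_union_left _ hwS)) hw2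
  seesShared b hb hone := by
    by_cases hadj : G.Adj b u ∨ G.Adj b v
    · have := h.pairDeg_of_adj hthin hS hb hadj
      exact absurd (by omega) (hne b hb hadj)
    obtain ⟨hbu, hbv⟩ := not_or.mp hadj
    have hdeg := h.pairDeg_of_not_adj hthin hS hbu hbv
    obtain ⟨x, hbx, hx, hshared⟩ := hstage.seesShared b hb (by omega)
    refine ⟨x, hbx, ?_, hshared⟩
    simp only [mem_union, mem_closedNbr, not_or]
    refine ⟨hx, ?_, fun hux => ?_⟩
    · rintro rfl
      exact hbu hbx
    · exact h.left.1 (hS (whiteDeg_eq_zero.mp hshared.2.1 u hux.symm))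

/-- The pairs are the only white edges left, and each of them is adjacent to exactly one vertex of
`S₀` with two paired neighbours, which does not carry two pendant paths, and otherwise only to
vertices of `S₀` with three paired neighbours. In this situation the endgame potential takes
over. -/
structure IsDeadlocked (G : SimpleGraph α) (S₀ S : Finset α) : Prop where
  whiteDeg_eq_zero : ∀ v, v ∉ S → whiteDeg G S₀ v = 2 → whiteDeg G S v = 0
  exists_adj : ∀ u v, IsPair G S₀ S u v → ∃ b ∈ S₀, (G.Adj b u ∨ G.Adj b v) ∧
    pairDeg G S₀ S b = 2 ∧ pendantCount G S b ≠ 2 ∧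
      ∀ c ∈ S₀, (G.Adj c u ∨ G.Adj c v) → c = b ∨ pairDeg G S₀ S c = 3

lemma IsThin.pairDeg_le_three (h : IsThin G S₀) (hS : S₀ ⊆ S) (hb : b ∈ S₀) :
    pairDeg G S₀ S b ≤ 3 :=
  (card_le_whiteDeg _ fun u hu => by
    obtain ⟨hbu, hu⟩ := mem_pairNbrs.mp hu
    exact ⟨hbu, fun hu₀ => hu.1 (hS hu₀)⟩).trans (h.whiteDeg_le_three b hb)

lemma IsThin.isDeadlocked (h : IsThin G S₀) (hS : S₀ ⊆ S)
    (hcycle : ∀ v, v ∉ S → whiteDeg G S₀ v = 2 → whiteDeg G S v = 0)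
    (hgain : ∀ u, IsPaired G S₀ S u →
      bluePotential G S₀ S < bluePotential G S₀ (S ∪ closedNbr G u) + 4)
    (htwo : ∀ u v, IsPair G S₀ S u v →
      ∃ b ∈ S₀, (G.Adj b u ∨ G.Adj b v) ∧ pairDeg G S₀ S b = 2) :
    IsDeadlocked G S₀ S where
  whiteDeg_eq_zero := hcycle
  exists_adj u v huv := by
    obtain ⟨b, hb, hadj, hb2⟩ := htwo u v huv
    have hlt := hgain u huv.left
    refine ⟨b, hb, hadj, hb2, fun hpendant => ?_, fun c hc hcadj => ?_⟩
    · have hdeg := huv.pairDeg_of_adj h hS hb hadj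
      have := huv.bluePotential_of_adj hS hb hadj (by grind [blueWeight])
      omega
    · by_contra! hne
      have hle := h.pairDeg_le_three hS hc
      have hgainb := huv.blueWeight_of_adj h hS hcycle hb hadj hb2.le
      have hgainc := huv.blueWeight_of_adj h hS hcycle hc hcadj (by omega)
      have : bluePotential G S₀ (S ∪ closedNbr G u) + 4 ≤ bluePotential G S₀ S :=
        sum_add_le_sum_of_subset {b, c} (huv.blueWeight_le hS hb hadj (by omega)) <| by
          rw [sum_pair hne.1.symm, sum_pair hne.1.symm]
          omega
      omega

lemma pairDeg_add_one_le (hS : S₀ ⊆ S) (hbx : G.Adj b x) (hx : x ∉ S₀)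
    (h0 : whiteDeg G S₀ x = 0) : pairDeg G S₀ S b + 1 ≤ whiteDeg G S₀ b := by
  have hxQ : x ∉ pairNbrs G S₀ S b := fun hxQ => by
    have := (mem_pairNbrs.mp hxQ).2.2.1
    omega
  rw [pairDeg, ← card_insert_of_notMem hxQ]
  refine card_le_whiteDeg _ fun u hu => ?_
  rcases mem_insert.mp hu with rfl | hu
  · exact ⟨hbx, hx⟩
  · exact ⟨(mem_pairNbrs.mp hu).1, fun hu₀ => (mem_pairNbrs.mp hu).2.1 (hS hu₀)⟩

lemma IsThin.pairDeg_le_one (h : IsThin G S₀) (hS : S₀ ⊆ S) (hb : b ∈ S₀) (hbx : G.Adj b x)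
    (hx : x ∉ S₀) (h0 : whiteDeg G S₀ x = 0) : pairDeg G S₀ S b ≤ 1 := by
  have := pairDeg_add_one_le hS hbx hx h0
  have := h.whiteDeg_le_two_of_isolated b hb x hx hbx h0
  omega

lemma IsPair.isPendantPath (h : IsPair G S₀ S u v) (hthin : IsThin G S₀) (hS : S₀ ⊆ S)
    (hb : b ∈ S₀) (hbu : G.Adj b u)
    (honly : ∀ c ∈ S₀, (G.Adj c u ∨ G.Adj c v) → c = b) : IsPendantPath G S b u v where
  adj := hbu
  isWhiteLeaf := by
    refine ⟨h.adj, h.right.1, fun z hvz => ?_⟩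
    by_cases hz : z ∈ S
    · have hz₀ := h.right.mem_of_adj hS hvz hz
      obtain rfl := honly z hz₀ (Or.inr hvz.symm)
      exact (h.not_adj hthin hS hb hbu hvz.symm).elim
    · exact h.symm.eq_of_adj hvz hz
  ne := by
    rintro rfl
    exact h.right.1 (hS hb)
  notMem := h.left.1
  eq_or_eq_of_adj z huz := by
    by_cases hz : z ∈ S
    · exact Or.inl (honly z (h.left.mem_of_adj hS huz hz) (Or.inl huz.symm))
    · exact Or.inr (h.eq_of_adj huz hz)

/-- The vertices of `S₀` with exactly `k` paired neighbours. -/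
noncomputable def pairDegSet (G : SimpleGraph α) (S₀ S : Finset α) (k : ℕ) : Finset α :=
  {b ∈ S₀ | pairDeg G S₀ S b = k}

lemma mem_pairDegSet {k : ℕ} : b ∈ pairDegSet G S₀ S k ↔ b ∈ S₀ ∧ pairDeg G S₀ S b = k := by
  simp [pairDegSet]

lemma IsDeadlocked.eq_of_adj (h : IsDeadlocked G S₀ S) (huv : IsPair G S₀ S u v)
    (hb : b ∈ pairDegSet G S₀ S 2) (hbadj : G.Adj b u ∨ G.Adj b v)
    (hw : w ∈ pairDegSet G S₀ S 2) (hwadj : G.Adj w u ∨ G.Adj w v) : b = w := by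
  obtain ⟨hb, hb2⟩ := mem_pairDegSet.mp hb
  obtain ⟨hw, hw2⟩ := mem_pairDegSet.mp hw
  obtain ⟨c, -, -, -, -, honly⟩ := h.exists_adj u v huv
  have hbc := (honly b hb hbadj).resolve_right (by omega)
  have hwc := (honly w hw hwadj).resolve_right (by omega)
  rw [hbc, hwc]

lemma IsPaired.card_closedNbr_sdiff_le (h : IsPaired G S₀ S u) : #(closedNbr G u \ S) ≤ 2 := by
  have hsub : closedNbr G u \ S ⊆ insert u (G.neighborFinset u \ S) := fun w hw => by
    obtain ⟨huw, hw⟩ := mem_sdiff.mp hw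
    rcases mem_closedNbr.mp huw with rfl | huw
    · exact mem_insert_self _ _
    · exact mem_insert_of_mem (by simp [huw, hw])
  have hcard : #(G.neighborFinset u \ S) = 1 := h.2.2
  exact (card_le_card hsub).trans ((card_insert_le _ _).trans_eq (by rw [hcard]))

lemma IsDeadlocked.card_isPaired_le (h : IsDeadlocked G S₀ S) (hthin : IsThin G S₀) (hS : S₀ ⊆ S) :
    #{u | IsPaired G S₀ S u} ≤ #(pairDegSet G S₀ S 2) * 4 := by
  have hsub : ({u | IsPaired G S₀ S u} : Finset α) ⊆ (pairDegSet G S₀ S 2).biUnion fun b =>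
      (pairNbrs G S₀ S b).biUnion fun t => closedNbr G t \ S := fun u hu => by
    obtain ⟨v, huv⟩ := hthin.exists_isPair hS (mem_filter.mp hu).2
    obtain ⟨b, hb, hadj, hb2, -⟩ := h.exists_adj u v huv
    refine mem_biUnion.mpr ⟨b, mem_pairDegSet.mpr ⟨hb, hb2⟩, mem_biUnion.mpr ?_⟩
    rcases hadj with hbu | hbv
    · exact ⟨u, mem_pairNbrs.mpr ⟨hbu, huv.left⟩,
        mem_sdiff.mpr ⟨self_mem_closedNbr u, huv.left.1⟩⟩
    · exact ⟨v, mem_pairNbrs.mpr ⟨hbv, huv.right⟩,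
        mem_sdiff.mpr ⟨mem_closedNbr_of_adj huv.adj.symm, huv.left.1⟩⟩
  refine (card_le_card hsub).trans (card_biUnion_le_card_mul _ _ 4 fun b hb => ?_)
  refine (card_biUnion_le_card_mul _ _ 2 fun t ht =>
    (mem_pairNbrs.mp ht).2.card_closedNbr_sdiff_le).trans_eq ?_
  rw [← pairDeg, (mem_pairDegSet.mp hb).2]

lemma IsDeadlocked.exists_pairDeg_eq_three (h : IsDeadlocked G S₀ S) (hthin : IsThin G S₀)
    (hS : S₀ ⊆ S) (hb : b ∈ pairDegSet G S₀ S 2) :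
    ∃ u v, IsPair G S₀ S u v ∧ G.Adj b u ∧
      ∃ w ∈ pairDegSet G S₀ S 3, G.Adj w u ∨ G.Adj w v := by
  obtain ⟨hb₀, hb2⟩ := mem_pairDegSet.mp hb
  by_contra! hcontra
  have honly : ∀ u v, IsPair G S₀ S u v → G.Adj b u →
      pendantCount G S b ≠ 2 ∧ ∀ c ∈ S₀, (G.Adj c u ∨ G.Adj c v) → c = b := by
    intro u v huv hbu
    obtain ⟨c, hc, hcadj, hc2, hcount, honly⟩ := h.exists_adj u v huv
    obtain rfl := h.eq_of_adj huv hb (Or.inl hbu) (mem_pairDegSet.mpr ⟨hc, hc2⟩) hcadj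
    refine ⟨hcount, fun d hd hdadj => (honly d hd hdadj).resolve_right fun hd3 => ?_⟩
    have hnone := hcontra u v huv hbu d (mem_pairDegSet.mpr ⟨hd, hd3⟩)
    exact hdadj.elim hnone.1 hnone.2
  have hcount : pairDeg G S₀ S b ≤ pendantCount G S b := card_le_card fun u hu => by
    obtain ⟨hbu, hu⟩ := mem_pairNbrs.mp hu
    obtain ⟨v, huv⟩ := hthin.exists_isPair hS hu
    exact mem_filter.mpr ⟨mem_univ u, v, huv.isPendantPath hthin hS hb₀ hbu (honly u v huv hbu).2⟩
  obtain ⟨u, hu⟩ := card_pos.mp (hb2.symm ▸ two_pos : 0 < pairDeg G S₀ S b)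
  obtain ⟨hbu, hu⟩ := mem_pairNbrs.mp hu
  obtain ⟨v, huv⟩ := hthin.exists_isPair hS hu
  have hle := pendantCount_le_pairDeg (G := G) hS hb₀
  exact (honly u v huv hbu).1 (by omega)

lemma IsDeadlocked.card_pairDegSet_le (h : IsDeadlocked G S₀ S) (hthin : IsThin G S₀)
    (hS : S₀ ⊆ S) : #(pairDegSet G S₀ S 2) ≤ #(pairDegSet G S₀ S 3) * 3 := by
  let touching (s : α) : Finset α :=
    {b ∈ pairDegSet G S₀ S 2 | ∃ t, IsPair G S₀ S s t ∧ (G.Adj b s ∨ G.Adj b t)}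
  have hsub : pairDegSet G S₀ S 2 ⊆ (pairDegSet G S₀ S 3).biUnion fun w =>
      (pairNbrs G S₀ S w).biUnion touching := fun b hb => by
    obtain ⟨u, v, huv, hbu, w, hw, hwu | hwv⟩ := h.exists_pairDeg_eq_three hthin hS hb
    · exact mem_biUnion.mpr ⟨w, hw, mem_biUnion.mpr ⟨u, mem_pairNbrs.mpr ⟨hwu, huv.left⟩,
        mem_filter.mpr ⟨hb, v, huv, Or.inl hbu⟩⟩⟩
    · exact mem_biUnion.mpr ⟨w, hw, mem_biUnion.mpr ⟨v, mem_pairNbrs.mpr ⟨hwv, huv.right⟩,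
        mem_filter.mpr ⟨hb, u, huv.symm, Or.inr hbu⟩⟩⟩
  have hone : ∀ s, #(touching s) ≤ 1 := fun s => card_le_one.mpr fun b hb c hc => by
    obtain ⟨hb, t, hst, hbadj⟩ := mem_filter.mp hb
    obtain ⟨hc, t', hst', hcadj⟩ := mem_filter.mp hc
    obtain rfl := hst.eq_of_adj hst'.adj hst'.right.1
    exact h.eq_of_adj hst hb hbadj hc hcadj
  refine (card_le_card hsub).trans (card_biUnion_le_card_mul _ _ 3 fun w hw => ?_)
  refine (card_biUnion_le_card_mul _ _ 1 fun s _ => hone s).trans_eq ?_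
  rw [← pairDeg, (mem_pairDegSet.mp hw).2]

lemma IsThin.card_isShared_le (h : IsThin G S₀) (hiso : ∀ v, ∃ u, G.Adj v u) :
    #{x | x ∉ S ∧ IsShared G S₀ x} ≤ #{b ∈ S₀ | SeesShared G S₀ S b} := by
  choose nbr hnbr using hiso
  have hmem : ∀ x, IsShared G S₀ x → nbr x ∈ S₀ := fun x hx =>
    whiteDeg_eq_zero.mp hx.2.1 _ (hnbr x)
  refine card_le_card_of_injOn nbr (fun x hx => ?_) fun x hx y hy hxy => ?_
  · obtain ⟨hxS, hx⟩ := (mem_filter.mp hx).2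
    exact mem_filter.mpr ⟨hmem x hx, x, (hnbr x).symm, hxS, hx⟩
  · obtain ⟨-, hx⟩ := (mem_filter.mp hx).2
    obtain ⟨-, hy⟩ := (mem_filter.mp hy).2
    exact h.isolated_unique _ (hmem x hx) x y hx.1 hy.1 (hnbr x).symm (hxy ▸ (hnbr y).symm)
      hx.2.1 hy.2.1

lemma IsDeadlocked.whiteWeight_le (h : IsDeadlocked G S₀ S) (hthin : IsThin G S₀) (hS : S₀ ⊆ S)
    (v : α) :
    whiteWeight (fun _ => 16) (fun _ => 4) G S v ≤
      whiteWeight (middleBase G S₀) (middleRate G S₀) G S v +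
        (if v ∈ ({u | IsPaired G S₀ S u} : Finset α) then 2 else 0) +
        if v ∈ ({x | x ∉ S ∧ IsShared G S₀ x} : Finset α) then 2 else 0 := by
  by_cases hv : v ∈ S
  · simp [whiteWeight, hv]
  have hle := whiteDeg_anti (G := G) hS v
  have htwo := hthin.whiteDeg_le_two v fun hv₀ => hv (hS hv₀)
  have hcycle := h.whiteDeg_eq_zero v hv
  simp only [whiteWeight, middleBase, middleRate, mem_filter_univ, IsPaired, hv, if_false,
    not_false_eq_true, true_and]
  by_cases hshared : IsShared G S₀ v
  · have := hshared.2.1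
    simp only [hshared, if_true]
    split_ifs <;> omega
  · simp only [hshared, if_false]
    grind

lemma IsThin.le_blueWeight (h : IsThin G S₀) (hS : S₀ ⊆ S) (b : α) :
    (if b ∈ pairDegSet G S₀ S 2 then 6 else 0) + (if b ∈ pairDegSet G S₀ S 3 then 6 else 0) +
      (if b ∈ ({b ∈ S₀ | SeesShared G S₀ S b} : Finset α) then 2 else 0) ≤
        blueWeight G S₀ S b := by
  by_cases hb : b ∈ S₀
  swap
  · simp [pairDegSet, hb]
  simp only [mem_pairDegSet, mem_filter, hb, true_and]
  by_cases hshared : SeesShared G S₀ S b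
  · obtain ⟨x, hbx, -, hx⟩ := id hshared
    have hone := h.pairDeg_le_one hS hb hbx hx.1 hx.2.1
    have := two_le_blueWeight hb hshared
    grind
  · have := six_le_blueWeight (G := G) (S := S) hb
    grind

lemma IsDeadlocked.endgamePotential_le (h : IsDeadlocked G S₀ S) (hthin : IsThin G S₀)
    (hS : S₀ ⊆ S) (hiso : ∀ v, ∃ u, G.Adj v u) :
    endgamePotential G S ≤ middlePotential G S₀ S := by
  have hwhite := sum_le_sum fun v (_ : v ∈ univ) => h.whiteWeight_le hthin hS v
  have hblue := sum_le_sum fun b (_ : b ∈ univ) => hthin.le_blueWeight hS b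
  simp only [sum_add_distrib, sum_ite_mem, univ_inter, sum_const, smul_eq_mul] at hwhite hblue
  rw [← whitePotential, ← whitePotential, ← endgamePotential, ← middleWhitePotential] at hwhite
  rw [← bluePotential] at hblue
  have hpaired := h.card_isPaired_le hthin hS
  have hdeg := h.card_pairDegSet_le hthin hS
  have hshared := hthin.card_isShared_le (S := S) hiso
  unfold middlePotential
  omega

/-- The isolated vertices of the white subgraph. -/
noncomputable def isolatedWhite (G : SimpleGraph α) (S : Finset α) : Finset α :=
  {x | x ∉ S ∧ whiteDeg G S x = 0}

/-- The weight that a blue vertex hands over to a neighbour isolated among the white vertices at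
the transition from the opening to the middle game. -/
noncomputable def surplus (G : SimpleGraph α) (S : Finset α) (b : α) : ℕ :=
  if whiteDeg G S b = 1 then 6 else 2

lemma mem_isolatedWhite : x ∈ isolatedWhite G S ↔ x ∉ S ∧ whiteDeg G S x = 0 := by
  simp [isolatedWhite]

lemma two_le_surplus (b : α) : 2 ≤ surplus G S b := by
  unfold surplus
  split_ifs <;> omega

lemma IsThin.exists_adj_ne (h : IsThin G S) (hx : IsShared G S x) (hxb : G.Adj x b) :
    ∃ c, G.Adj x c ∧ c ≠ b := by
  by_contra! honly
  have hb := whiteDeg_eq_zero.mp hx.2.1 b hxb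
  exact hx.2.2 b hxb (h.whiteDeg_eq_one_of_isWhiteLeaf b hb x ⟨hxb.symm, hx.1, honly⟩)

lemma IsThin.middleBase_le (h : IsThin G S) (hiso : ∀ v, ∃ u, G.Adj v u)
    (hx : x ∈ isolatedWhite G S) :
    middleBase G S x ≤ 10 + ∑ b ∈ G.neighborFinset x, surplus G S b := by
  by_cases hshared : IsShared G S x
  · obtain ⟨b, hxb⟩ := hiso x
    obtain ⟨c, hxc, hcb⟩ := h.exists_adj_ne hshared hxb
    have hsub : {b, c} ⊆ G.neighborFinset x := by
      simp [insert_subset_iff, hxb, hxc]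
    have hsum := sum_le_sum_of_subset (f := surplus G S) hsub
    rw [sum_pair hcb.symm] at hsum
    have := two_le_surplus (G := G) (S := S) b
    have := two_le_surplus (G := G) (S := S) c
    rw [middleBase, if_pos hshared]
    omega
  · obtain ⟨hx, h0⟩ := mem_isolatedWhite.mp hx
    obtain ⟨b, hxb, hb⟩ : ∃ b, G.Adj x b ∧ whiteDeg G S b = 1 := by
      by_contra! hne
      exact hshared ⟨hx, h0, hne⟩
    have hle := single_le_sum (f := surplus G S) (fun _ _ => Nat.zero_le _)
      ((G.mem_neighborFinset x b).mpr hxb)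
    rw [surplus, if_pos hb] at hle
    rw [middleBase, if_neg hshared]
    omega

lemma IsThin.blueWeight_add_surplus_le (h : IsThin G S) (hb : b ∈ S) (hbx : G.Adj b x)
    (hx : x ∈ isolatedWhite G S) : blueWeight G S S b + surplus G S b ≤ 6 := by
  obtain ⟨hx, h0⟩ := mem_isolatedWhite.mp hx
  have hle := h.pairDeg_le_one Subset.rfl hb hbx hx h0
  by_cases hone : whiteDeg G S b = 1
  · have hpair : pairDeg G S S b = 0 := by
      have := pairDeg_add_one_le (Subset.refl S) hbx hx h0
      omega
    have hcycle : ¬ SeesCycle G S S b := fun ⟨u, hbu, hu, hu2, _⟩ => by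
      obtain rfl := eq_of_whiteDeg_le_one hone.le hbu hu hbx hx
      omega
    have hshared : ¬ SeesShared G S S b := fun ⟨u, hbu, _, hu⟩ => hu.2.2 b hbu.symm hone
    simp [blueWeight, surplus, hone, hpair, hcycle, hshared]
  · grind [blueWeight, surplus]

lemma blueWeight_self_le_openingWeight (v : α) : blueWeight G S S v ≤ openingWeight G S v := by
  by_cases hv : v ∈ S
  swap
  · simp [blueWeight_of_notMem hv]
  rcases eq_or_ne (whiteDeg G S v) 0 with h0 | h0
  · have hmem := whiteDeg_eq_zero.mp h0
    have hpair : pairDeg G S S v = 0 := card_eq_zero.mpr <| eq_empty_of_forall_notMem fun u hu =>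
      (mem_pairNbrs.mp hu).2.1 (hmem u (mem_pairNbrs.mp hu).1)
    have hcycle : ¬ SeesCycle G S S v := fun ⟨u, hvu, hu, _⟩ => hu (hmem u hvu)
    have hshared : ¬ SeesShared G S S v := fun ⟨u, hvu, hu, _⟩ => hu (hmem u hvu)
    simp [blueWeight, hpair, hcycle, hshared]
  · have hsix := six_le_openingWeight (Nat.pos_of_ne_zero h0)
    have height : pendantCount G S v = 2 → 8 ≤ openingWeight G S v := fun h =>
      eight_le_openingWeight (Nat.pos_of_ne_zero h0) (Or.inr h)
    grind [blueWeight]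

lemma IsThin.middleWeight_add_le (h : IsThin G S) (hiso : ∀ v, ∃ u, G.Adj v u) (v : α) :
    whiteWeight (middleBase G S) (middleRate G S) G S v + blueWeight G S S v +
        #(G.neighborFinset v ∩ isolatedWhite G S) * surplus G S v ≤
      openingWeight G S v +
        if v ∈ isolatedWhite G S then ∑ b ∈ G.neighborFinset v, surplus G S b else 0 := by
  by_cases hv : v ∈ S
  · have hunique : #(G.neighborFinset v ∩ isolatedWhite G S) ≤ 1 := by
      refine card_le_one.mpr fun x hx y hy => ?_
      simp only [mem_inter, SimpleGraph.mem_neighborFinset, mem_isolatedWhite] at hx hy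
      exact h.isolated_unique v hv x y hx.2.1 hy.2.1 hx.1 hy.1 hx.2.2 hy.2.2
    rw [whiteWeight, if_pos hv, zero_add, if_neg fun hiso => (mem_isolatedWhite.mp hiso).1 hv]
    rcases eq_empty_or_nonempty (G.neighborFinset v ∩ isolatedWhite G S) with hempty | ⟨x, hx⟩
    · simpa [hempty] using blueWeight_self_le_openingWeight v
    · obtain ⟨hvx, hx⟩ := mem_inter.mp hx
      rw [SimpleGraph.mem_neighborFinset] at hvx
      have hle := h.blueWeight_add_surplus_le hv hvx hx
      have hsix := six_le_openingWeight
        (whiteDeg_pos.mpr ⟨x, hvx, (mem_isolatedWhite.mp hx).1⟩)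
      have := Nat.mul_le_mul_right (surplus G S v) hunique
      omega
  · have hempty : G.neighborFinset v ∩ isolatedWhite G S = ∅ := by
      refine eq_empty_of_forall_notMem fun x hx => ?_
      simp only [mem_inter, SimpleGraph.mem_neighborFinset, mem_isolatedWhite] at hx
      exact hv (whiteDeg_eq_zero.mp hx.2.2 v hx.1.symm)
    have hle := h.whiteDeg_le_two v hv
    rw [hempty, card_empty, zero_mul, blueWeight_of_notMem hv, openingWeight_of_notMem hv,
      whiteWeight, if_neg hv]
    by_cases h0 : whiteDeg G S v = 0
    · have hmem := mem_isolatedWhite.mpr ⟨hv, h0⟩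
      simpa [hmem, h0] using h.middleBase_le hiso hmem
    · rw [middleBase_of_whiteDeg_ne_zero h0]
      grind [middleRate]

lemma sum_card_mul_surplus (G : SimpleGraph α) (S : Finset α) :
    ∑ b, #(G.neighborFinset b ∩ isolatedWhite G S) * surplus G S b =
      ∑ x ∈ isolatedWhite G S, ∑ b ∈ G.neighborFinset x, surplus G S b := by
  simp only [← smul_eq_mul, ← sum_const]
  exact sum_comm' fun b x => by simp [SimpleGraph.adj_comm, and_comm]

theorem IsThin.middlePotential_self_le (h : IsThin G S) (hiso : ∀ v, ∃ u, G.Adj v u) :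
    middlePotential G S S ≤ openingPotential G S := by
  have hsum := sum_le_sum fun v (_ : v ∈ univ) => h.middleWeight_add_le hiso v
  simp only [sum_add_distrib, sum_ite_mem, univ_inter, sum_card_mul_surplus] at hsum
  exact Nat.le_of_add_le_add_right hsum

lemma IsThin.isProfitableMove (h : IsThin G S₀) (hS : S₀ ⊆ S) (hp : p ∉ S)
    (hgain : middlePotential G S₀ (S ∪ closedNbr G p) + 24 ≤ middlePotential G S₀ S) :
    IsProfitableMove G (middlePotential G S₀) 24 8 S p :=
  ⟨not_closedNbr_subset (self_mem_closedNbr p) hp, hgain, fun _ =>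
    h.middlePotential_reply_eight (hS.trans subset_union_left)⟩

lemma IsPair.isProfitableMove (huv : IsPair G S₀ S u v) (h : IsThin G S₀) (hS : S₀ ⊆ S)
    (hstage : IsPairStage G S₀ S)
    (hne : ∀ b ∈ S₀, G.Adj b u ∨ G.Adj b v → pairDeg G S₀ S b ≠ 2) :
    IsProfitableMove G (middlePotential G S₀) 18 14 S u := by
  have hwhite := h.middleWhitePotential_of_isPaired hS huv.left
  have hblue := bluePotential_union_closedNbr_le_add_two (G := G) hS u
  exact ⟨not_closedNbr_subset (self_mem_closedNbr u) huv.left.1,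
    by unfold middlePotential; omega, fun _ =>
    (huv.isPairStage_union_closedNbr h hS hstage hne).middlePotential_reply h
      (hS.trans subset_union_left)⟩

theorem domGameVal_le_middlePotential {V : Type} [Fintype V] {H : Finset (Finset V)}
    {S₀ S : Finset V} (hiso : ∀ v, ∃ u, (twoSection H).Adj v u) (h : IsThin (twoSection H) S₀)
    (hS : S₀ ⊆ S) : 16 * domGameVal H true S ≤ middlePotential (twoSection H) S₀ S := by
  refine mul_domGameVal_le_of_potential (Inv := (S₀ ⊆ ·)) (fun _ _ => Subset.trans)
    (fun S hS _ => ?_) hS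
  by_cases hcycle : ∃ v, v ∉ S ∧ whiteDeg (twoSection H) S₀ v = 2 ∧ whiteDeg (twoSection H) S v ≠ 0
  · obtain ⟨p, hp, hgain⟩ := h.exists_cycle_move hS hcycle
    exact Or.inr ⟨p, 24, 8, by simp, by simp, h.isProfitableMove hS hp hgain⟩
  by_cases hblue : ∃ u, IsPaired (twoSection H) S₀ S u ∧
      bluePotential (twoSection H) S₀ (S ∪ closedNbr (twoSection H) u) + 4 ≤
        bluePotential (twoSection H) S₀ S
  · obtain ⟨u, hu, hgain⟩ := hblue
    have hwhite := h.middleWhitePotential_of_isPaired hS hu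
    exact Or.inr ⟨u, 24, 8, by simp, by simp,
      h.isProfitableMove hS hu.1 (by unfold middlePotential; omega)⟩
  push Not at hcycle hblue
  have hstage := h.isPairStage hS hcycle hblue
  by_cases hpair : ∃ u v, IsPair (twoSection H) S₀ S u v ∧ ∀ b ∈ S₀,
      ((twoSection H).Adj b u ∨ (twoSection H).Adj b v) → pairDeg (twoSection H) S₀ S b ≠ 2
  · obtain ⟨u, v, huv, hne⟩ := hpair
    exact Or.inr ⟨u, 18, 14, by simp, by simp, huv.isProfitableMove h hS hstage hne⟩
  push Not at hpair
  have hend := (h.isDeadlocked hS hcycle hblue hpair).endgamePotential_le h hS hiso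
  refine Or.inl ((domGameVal_le_endgamePotential fun v hv => ?_).trans hend)
  have := h.whiteDeg_le_two v fun hv₀ => hv (hS hv₀)
  have := whiteDeg_anti (G := twoSection H) hS v
  have := hcycle v hv
  omega

end MiddleGame

section MainTheorem

variable [Fintype V] {H : Finset (Finset V)}

theorem domGameVal_le_openingPotential (hiso : ∀ v, ∃ u, (twoSection H).Adj v u) (S : Finset V) :
    16 * domGameVal H true S ≤ openingPotential (twoSection H) S := by
  refine mul_domGameVal_le_of_potential (Inv := fun _ => True) (fun _ _ _ _ => trivial)
    (fun S _ _ => ?_) trivial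
  by_cases hquiet : IsQuiet 24 (twoSection H) S
  swap
  · unfold IsQuiet at hquiet
    push Not at hquiet
    obtain ⟨p, hp, hgain⟩ := hquiet
    exact Or.inr ⟨p, 24, 8, by simp, by simp, hp, hgain, fun q => openingPotential_reply_eight⟩
  by_cases hsupp : ∃ b, b ∉ S ∧ IsSupport (twoSection H) S b
  · obtain ⟨b, hb, hb'⟩ := hsupp
    obtain ⟨-, y, -, hy⟩ := hquiet.exists_isSpiderCenter hb hb'
    have hgain := openingPotential_of_three_le_pendantCount hy.1 hy.2.1.ge
    rw [hy.2.1, hy.2.2] at hgain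
    exact Or.inr ⟨y, 22, 10, by simp, by simp,
      not_closedNbr_subset (self_mem_closedNbr y) hy.1, hgain, fun q =>
      hy.openingPotential_reply fun b => hquiet.exists_isSpiderCenter⟩
  push Not at hsupp
  by_cases hquiet' : IsQuiet 22 (twoSection H) S
  swap
  · unfold IsQuiet at hquiet'
    push Not at hquiet'
    obtain ⟨p, hp, hgain⟩ := hquiet'
    refine Or.inr ⟨p, 22, 10, by simp, by simp, hp, hgain, fun q hq => ?_⟩
    refine (openingPotential_reply hq).resolve_right fun ⟨_, _, w, _, hw, hspecial⟩ => ?_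
    obtain ⟨b, hb, hb'⟩ := exists_isSupport_of_isSpecial (subset_union_left.trans subset_union_left)
      (fun hwS => hw (mem_union_left _ hwS)) hspecial
    exact hsupp b hb hb'
  have hthin := hquiet'.isThin hsupp
  exact Or.inl ((domGameVal_le_middlePotential hiso hthin Subset.rfl).trans
    (hthin.middlePotential_self_le hiso))

lemma openingPotential_empty {α : Type*} [Fintype α] (G : SimpleGraph α) :
    openingPotential G ∅ = 10 * Fintype.card α := by
  simp [openingPotential, openingWeight, mul_comm]

end MainTheorem

/-- if `H` is a hypergraph on `n` vertices with no isolated vertices and no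
edges of size one, then `γ_g(H) ≤ (5/8) n`. -/
theorem stmt_7 (V : Type) [Fintype V] (H : Finset (Finset V))
    (hisol : ∀ v : V, ∃ u : V, u ≠ v ∧ ∃ e ∈ H, u ∈ e ∧ v ∈ e)
    (hedge : ∀ e ∈ H, e.card ≠ 1) :
    (gammaGame H : ℝ) ≤ 5 / 8 * Fintype.card V := by
  have hadj : ∀ v, ∃ u, (twoSection H).Adj v u := fun v => by
    obtain ⟨u, huv, e, he, hu, hv⟩ := hisol v
    exact ⟨u, huv.symm, e, he, hv, hu⟩
  have hgame : 16 * gammaGame H ≤ 10 * Fintype.card V :=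
    (domGameVal_le_openingPotential hadj ∅).trans_eq (openingPotential_empty _)
  have hgame' : (16 : ℝ) * gammaGame H ≤ 10 * Fintype.card V := mod_cast hgame
  linarith
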